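/- Let v : Λ → ℝ be pointwise nonnegative and of positive type (its discrete Fourier transform on Λ is pointwise nonnegative), and let κ > 0. Then the relative grand canonical partition function of the lattice Bose gas at coupling λ = ν² converges in the mean-field limit to the relative classical partition function: lim_{ν→0⁺} 𝒵^{ν,κ,ν²} = 𝒵^{cl}. -/

import Mathlib

/-!
Write `N = |Λ|` and `h = -Δ/2 + κ`. The ratio is obtained from the limit
`ν^N Ξ^{ν,κ,ν²} → π^{-N} ∫ e^{-⟨φ,hφ⟩} e^{-½ ∑ |φ(x)|² v(x-y) |φ(y)|²} dφ`, applied to `v` and to the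
zero potential (`tendsto_grandXi`); the common factor `ν^N` cancels and the limit of the
denominator is the Gaussian integral `1 / det h` (`integral_exp_neg_quadForm`).

The limit rests on four ingredients.

* Splitting. In the `ℓ^∞` operator norm, kinetic and interaction parts both generate contractions.
  Moving one particle changes the interaction energy by `O(ν² n)`, so Duhamel's formula replaces
  `e^{-H_n}` by `(e^{νΔ/2})^{⊗n} e^{-potential}`, up to a trace error
  `O(ν³ n²) Tr P_n⁺` (`norm_trace_split_le`). Summed against `e^{-κνn}` and multiplied by `ν^N` this
  is `O(ν)`.

* Auxiliary field. As `v` is of positive type, it is the covariance of a real Gaussian field `σ`, and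
  `e^{-potential}` is the expectation of `∏ e^{iνσ(x_i)}` (`exists_aux_field`).

* Coherent states. For a one-particle matrix `M` with `|⟨φ,Mφ⟩| ≤ r |φ|²`, `r < 1`, Wick's theorem for
  the standard complex Gaussian gives `∑_n Tr(M^{⊗n} P_n⁺) = π^{-N} ∫ e^{⟨φ,Mφ⟩ - |φ|²} dφ`
  (`hasSum_coherent`). It is used with `M = e^{-κν} e^{νΔ/2} e^{iνσ}`, for which `r = e^{-κν}` by the
  Schur test.

* Rescaling `φ` by `√ν`, the exponent becomes `-⟨φ,(1-M)φ⟩/ν → -⟨φ,(h-iσ)φ⟩`, dominated by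
  `e^{-κ|φ|²/2}`. Dominated convergence on the product of the laws of `σ` and `φ`, followed by the
  expectation over `σ`, yields the classical weight (`tendsto_field_integral`).
-/

set_option linter.unusedSectionVars false

open scoped BigOperators ComplexConjugate Classical Real Topology
open MeasureTheory Filter Matrix

noncomputable section

/-- The discrete torus `Λ = (ℤ/Lℤ)^d`. -/
abbrev Tor (d L : ℕ) := Fin d → ZMod L

/-- Configuration space `Λⁿ`. -/
abbrev Cfg (d L n : ℕ) := Fin n → Tor d L

/-- The unit vector `e j` in the torus. -/
def unitVec (d L : ℕ) (j : Fin d) : Tor d L := fun i => if i = j then 1 else 0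

/-- The discrete Laplacian on the torus, as a matrix:
`Δ f (x) = ∑_{j} (f (x + e_j) - f x) + (f (x - e_j) - f x)`. -/
def lap (d L : ℕ) [NeZero L] : Matrix (Tor d L) (Tor d L) ℂ :=
  fun x y =>
    (∑ j : Fin d,
      ((if y = x + unitVec d L j then (1 : ℂ) else 0)
        + (if y = x - unitVec d L j then (1 : ℂ) else 0)))
      - (if y = x then (2 * d : ℂ) else 0)

/-- Matrix exponential, defined entrywise via the exponential power series. -/
def matExp {m : Type*} [Fintype m] [DecidableEq m] (A : Matrix m m ℂ) : Matrix m m ℂ :=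
  Matrix.of fun x y => ∑' (n : ℕ), ((((Nat.factorial n : ℕ) : ℂ)⁻¹) • A ^ n) x y

/-- The Laplacian `Δ_i` acting in the `i`-th variable, summed over `i`, as a matrix on `ℓ²(Λⁿ)`. -/
def kin (d L n : ℕ) [NeZero L] : Matrix (Cfg d L n) (Cfg d L n) ℂ :=
  fun X Y => ∑ i : Fin n,
    (if ∀ j : Fin n, j ≠ i → X j = Y j then lap d L (X i) (Y i) else 0)

/-- The `n`-particle Hamiltonian
`H_n^{ν,λ} = -(ν/2) ∑_i Δ_i + (λ/2) ∑_{i,j} v(x_i - x_j)` on `ℓ²(Λⁿ)`. -/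
def ham (d L : ℕ) [NeZero L] (v : Tor d L → ℝ) (ν lam : ℝ) (n : ℕ) :
    Matrix (Cfg d L n) (Cfg d L n) ℂ :=
  ((-(ν / 2) : ℝ) : ℂ) • kin d L n
    + Matrix.diagonal (fun X : Cfg d L n =>
        (((lam / 2) * ∑ i : Fin n, ∑ j : Fin n, v (X i - X j) : ℝ) : ℂ))

/-- The symmetrization projection `P_n⁺` as a matrix on `ℓ²(Λⁿ)`. -/
def symProj (d L n : ℕ) [NeZero L] : Matrix (Cfg d L n) (Cfg d L n) ℂ :=
  fun X Y => ((Nat.factorial n : ℕ) : ℂ)⁻¹ * ∑ g : Equiv.Perm (Fin n), (if Y = X ∘ g then (1 : ℂ) else 0)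

/-- The grand canonical partition function
`Ξ^{ν,κ,λ} = ∑_{n ≥ 0} Tr(e^{-(H_n^{ν,λ} + κνn)} P_n⁺)`. -/
def grandXi (d L : ℕ) [NeZero L] (v : Tor d L → ℝ) (ν κ lam : ℝ) : ℂ :=
  ∑' (n : ℕ),
    (matExp (-(ham d L v ν lam n
        + ((κ * ν * n : ℝ) : ℂ) • (1 : Matrix (Cfg d L n) (Cfg d L n) ℂ)))
      * symProj d L n).trace

/-- The relative grand canonical partition function `𝒵^{ν,κ,λ} = Ξ^{ν,κ,λ}/Ξ^{ν,κ,0}`. -/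
def relZ (d L : ℕ) [NeZero L] (v : Tor d L → ℝ) (ν κ lam : ℝ) : ℂ :=
  grandXi d L v ν κ lam / grandXi d L v ν κ 0

/-- The density of the complex Gaussian measure `μ_{(-Δ/2+κ)^{-1}}` with respect to
Lebesgue measure on `ℂ^Λ`. -/
def gaussWeight (d L : ℕ) [NeZero L] (κ : ℝ) (φ : Tor d L → ℂ) : ℂ :=
  (((Real.pi : ℂ) ^ Fintype.card (Tor d L))
      * ((-(1 / 2 : ℂ)) • lap d L + (κ : ℂ) • 1)⁻¹.det)⁻¹
    * Complex.exp (∑ x : Tor d L,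
        (starRingEnd ℂ) (φ x) * (((1 / 2 : ℂ) • lap d L - (κ : ℂ) • 1).mulVec φ x))

/-- The interaction weight `e^{-(1/2) ∑_{x,y} |φ(x)|² v(x-y) |φ(y)|²}`. -/
def intWeight (d L : ℕ) [NeZero L] (v : Tor d L → ℝ) (φ : Tor d L → ℂ) : ℂ :=
  Complex.exp (-(1 / 2 : ℂ) * ∑ x : Tor d L, ∑ y : Tor d L,
    (Complex.normSq (φ x) : ℂ) * ((v (x - y) : ℝ) : ℂ) * (Complex.normSq (φ y) : ℂ))

/-- The relative classical partition function `𝒵^{cl}`. -/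
def Zcl (d L : ℕ) [NeZero L] (v : Tor d L → ℝ) (κ : ℝ) : ℂ :=
  ∫ φ : Tor d L → ℂ, gaussWeight d L κ φ * intWeight d L v φ

/-- The discrete Fourier transform of `v` on the torus. -/
def dft (d L : ℕ) [NeZero L] (v : Tor d L → ℝ) (ξ : Tor d L) : ℂ :=
  ∑ x : Tor d L, ((v x : ℝ) : ℂ) *
    Complex.exp (2 * (Real.pi : ℂ) * Complex.I *
      (∑ j : Fin d, (((ξ j).val : ℕ) : ℂ) * (((x j).val : ℕ) : ℂ)) / (L : ℂ))

/-- `v` is of positive type: its discrete Fourier transform is pointwise a nonnegative real. -/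
def IsPosType (d L : ℕ) [NeZero L] (v : Tor d L → ℝ) : Prop :=
  ∀ ξ : Tor d L, (dft d L v ξ).im = 0 ∧ 0 ≤ (dft d L v ξ).re

/-- The squared `ℓ²` norm of a complex field. -/
def sqNorm {ι : Type*} [Fintype ι] (φ : ι → ℂ) : ℝ := ∑ x, Complex.normSq (φ x)

/-- The sesquilinear form `⟨φ, M φ⟩` of a matrix `M`. -/
def quadForm {ι : Type*} [Fintype ι] (M : Matrix ι ι ℂ) (φ : ι → ℂ) : ℂ :=
  ∑ x, (starRingEnd ℂ) (φ x) * M.mulVec φ x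

/-- The tensor power `M^{⊗n}`, as a matrix indexed by `n`-tuples. -/
def tensPow {ι : Type*} (M : Matrix ι ι ℂ) (n : ℕ) : Matrix (Fin n → ι) (Fin n → ι) ℂ :=
  Matrix.of fun X Y => ∏ i, M (X i) (Y i)

/-- The symmetrization projection on functions of `n`-tuples in an arbitrary finite type. -/
def symMat (ι : Type*) [DecidableEq ι] (n : ℕ) : Matrix (Fin n → ι) (Fin n → ι) ℂ :=
  fun X Y => ((Nat.factorial n : ℕ) : ℂ)⁻¹ *
    ∑ g : Equiv.Perm (Fin n), (if Y = X ∘ g then (1 : ℂ) else 0)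

/-! ### Gaussian moments -/

lemma integrable_pow_mul_gauss (m : ℕ) :
    Integrable (fun z : ℂ => ‖z‖ ^ m * Real.exp (-Complex.normSq z)) := by
  have h := Complex.integral_rpow_mul_exp_neg_rpow (p := 2) (q := m) (by norm_num)
    (by have : (0 : ℝ) ≤ m := by positivity
        linarith)
  have h2 : Integrable (fun x : ℂ => ‖x‖ ^ (m : ℝ) * Real.exp (-‖x‖ ^ (2 : ℝ))) := by
    apply Integrable.of_integral_ne_zero
    rw [h]
    have : 0 < Real.Gamma (((m : ℝ) + 2) / 2) := Real.Gamma_pos_of_pos (by positivity)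
    positivity
  refine h2.congr (Eventually.of_forall fun z => ?_)
  simp only [Real.rpow_natCast, Complex.normSq_eq_norm_sq]
  norm_cast

lemma integrable_mono_gauss (k l : ℕ) :
    Integrable (fun z : ℂ => conj z ^ k * z ^ l * (Real.exp (-Complex.normSq z) : ℂ)) := by
  refine (integrable_pow_mul_gauss (k + l)).mono' ?_ (Eventually.of_forall fun z => ?_)
  · have : Continuous (fun z : ℂ => conj z ^ k * z ^ l * (Real.exp (-Complex.normSq z) : ℂ)) := by
      have := Complex.continuous_normSq
      fun_prop
    exact this.aestronglyMeasurable
  · rw [norm_mul, norm_mul, norm_pow, norm_pow, Complex.norm_real, RCLike.norm_conj, pow_add,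
      Real.norm_of_nonneg (Real.exp_nonneg _)]

/-- Monomials in one complex variable are orthogonal under the Gaussian weight: for different
degrees the integral vanishes by invariance under a rotation by a generic angle. -/
lemma integral_mono_gauss (k l : ℕ) :
    ∫ z : ℂ, conj z ^ k * z ^ l * (Real.exp (-Complex.normSq z) : ℂ)
      = if k = l then (π : ℂ) * (Nat.factorial k : ℂ) else 0 := by
  split_ifs with hkl
  · subst hkl
    have h := Complex.integral_rpow_mul_exp_neg_rpow (p := 2) (q := (2 * k : ℕ)) (by norm_num)
      (by have : (0 : ℝ) ≤ (2 * k : ℕ) := by positivity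
          linarith)
    have e : ∀ z : ℂ, conj z ^ k * z ^ k * (Real.exp (-Complex.normSq z) : ℂ)
        = ((‖z‖ ^ ((2 * k : ℕ) : ℝ) * Real.exp (-‖z‖ ^ (2 : ℝ)) : ℝ) : ℂ) := by
      intro z
      rw [← mul_pow, ← Complex.normSq_eq_conj_mul_self, Real.rpow_natCast, pow_mul,
        Complex.normSq_eq_norm_sq]
      norm_cast
    simp_rw [e]
    rw [integral_complex_ofReal, h]
    have : ((((2 * k : ℕ) : ℝ) + 2) / 2) = (k : ℝ) + 1 := by push_cast; ring
    rw [this, Real.Gamma_nat_eq_factorial]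
    push_cast; ring
  · set I := ∫ z : ℂ, conj z ^ k * z ^ l * (Real.exp (-Complex.normSq z) : ℂ) with hI
    let c : Circle := Circle.exp 1
    have hmp := (rotation c).measurePreserving
    have h1 := hmp.integral_comp (rotation c).toHomeomorph.measurableEmbedding
      (fun z : ℂ => conj z ^ k * z ^ l * (Real.exp (-Complex.normSq z) : ℂ))
    have h2 : ∀ z : ℂ, conj (rotation c z) ^ k * (rotation c z) ^ l *
        (Real.exp (-Complex.normSq (rotation c z)) : ℂ)
        = (conj (c : ℂ) ^ k * (c : ℂ) ^ l) *
          (conj z ^ k * z ^ l * (Real.exp (-Complex.normSq z) : ℂ)) := by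
      intro z
      simp only [rotation_apply, map_mul, Circle.normSq_coe, one_mul, mul_pow]
      ring
    simp_rw [h2] at h1
    rw [integral_const_mul, ← hI] at h1
    have h3 : conj (c : ℂ) ^ k * (c : ℂ) ^ l ≠ 1 := by
      have hc : (c : ℂ) = Complex.exp Complex.I := by simp [c, Circle.coe_exp]
      rw [hc, ← Complex.exp_conj, ← Complex.exp_nat_mul, ← Complex.exp_nat_mul, ← Complex.exp_add]
      intro h
      rw [Complex.exp_eq_one_iff] at h
      obtain ⟨n, hn⟩ := h
      have h4 : ((l : ℝ) - k) = n * (2 * π) := by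
        have := congrArg Complex.im hn
        simp at this
        linarith
      have hn0 : n ≠ 0 := by
        rintro rfl
        simp at h4
        apply hkl
        have : (l : ℝ) = k := by linarith
        exact_mod_cast this.symm
      have hirr := irrational_pi
      apply hirr
      refine ⟨((l : ℚ) - k) / (2 * n), ?_⟩
      have : (n : ℝ) ≠ 0 := by exact_mod_cast hn0
      push_cast
      field_simp
      linarith
    have : (conj (c : ℂ) ^ k * (c : ℂ) ^ l - 1) * I = 0 := by rw [sub_mul, h1]; ring
    rcases mul_eq_zero.mp this with h | h
    · exact absurd (sub_eq_zero.mp h) h3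
    · exact h

section Wick
variable {ι : Type*} [Fintype ι] [DecidableEq ι]

/-- The number of indices at which the tuple `X` takes the value `x`. -/
def occ {n : ℕ} (X : Fin n → ι) (x : ι) : ℕ := Fintype.card {i // X i = x}

lemma prod_comp_occ {n : ℕ} (X : Fin n → ι) (f : ι → ℂ) :
    ∏ i, f (X i) = ∏ x, f x ^ occ X x := by
  have h := Finset.prod_fiberwise (Finset.univ : Finset (Fin n)) X (fun i => f (X i))
  rw [← h]
  refine Finset.prod_congr rfl fun x _ => ?_
  rw [Finset.prod_congr rfl (g := fun _ => f x)]
  · rw [Finset.prod_const, occ, Fintype.card_subtype]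
  · intro i hi
    simp at hi
    rw [hi]

/-- The number of permutations carrying one tuple to another. -/
lemma card_perm_comp {n : ℕ} (X Y : Fin n → ι) :
    (∑ g : Equiv.Perm (Fin n), (if Y = X ∘ g then (1 : ℂ) else 0))
      = if occ X = occ Y then ∏ x, ((occ X x).factorial : ℂ) else 0 := by
  split_ifs with h
  · have hex : ∃ g : Equiv.Perm (Fin n), Y = X ∘ g := by
      have hx : ∀ x, Nonempty ({i // Y i = x} ≃ {i // X i = x}) := fun x =>
        ⟨Fintype.equivOfCardEq (congrFun h x).symm⟩
      refine ⟨(Equiv.sigmaFiberEquiv Y).symm.trans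
        ((Equiv.sigmaCongrRight fun x => (hx x).some).trans (Equiv.sigmaFiberEquiv X)), ?_⟩
      funext i
      simp only [Function.comp, Equiv.trans_apply]
      exact (((hx (Y i)).some ⟨i, rfl⟩).2).symm
    obtain ⟨g₀, rfl⟩ := hex
    have h1 : (∑ g : Equiv.Perm (Fin n), (if X ∘ g₀ = X ∘ g then (1 : ℂ) else 0))
        = ∑ g : Equiv.Perm (Fin n), (if X ∘ g = X then (1 : ℂ) else 0) := by
      refine Fintype.sum_equiv (Equiv.mulRight g₀⁻¹) _ _ fun g => ?_
      congr 1
      apply propext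
      constructor
      · intro hh
        funext i
        have := congrFun hh (g₀⁻¹ i)
        simpa using this.symm
      · intro hh
        funext i
        have := congrFun hh (g₀ i)
        simpa using this.symm
    rw [h1, Finset.sum_boole]
    have := DomMulAct.stabilizer_card X
    rw [Fintype.card_subtype] at this
    rw [this]
    push_cast
    rfl
  · refine Finset.sum_eq_zero fun g _ => ?_
    rw [if_neg]
    rintro rfl
    apply h
    funext x
    exact Fintype.card_congr (Equiv.subtypeEquiv g (fun a => by simp)).symm

lemma wick_prod {n : ℕ} (X Y : Fin n → ι) (φ : ι → ℂ) :
    (∏ i, (conj (φ (X i)) * φ (Y i))) * (Real.exp (-sqNorm φ) : ℂ)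
      = ∏ x, (conj (φ x) ^ occ X x * φ x ^ occ Y x * (Real.exp (-Complex.normSq (φ x)) : ℂ)) := by
  rw [Finset.prod_mul_distrib, prod_comp_occ X (fun x => conj (φ x)), prod_comp_occ Y φ, sqNorm,
    ← Finset.sum_neg_distrib, Real.exp_sum, Finset.prod_mul_distrib, Finset.prod_mul_distrib]
  push_cast
  rfl

lemma integrable_wick {n : ℕ} (X Y : Fin n → ι) :
    Integrable (fun φ : ι → ℂ =>
      (∏ i, (conj (φ (X i)) * φ (Y i))) * (Real.exp (-sqNorm φ) : ℂ)) := by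
  simp_rw [wick_prod]
  exact Integrable.fintype_prod
    (f := fun x z => conj z ^ occ X x * z ^ occ Y x * (Real.exp (-Complex.normSq z) : ℂ))
    (fun x => integrable_mono_gauss _ _)

/-- Wick's theorem for the standard complex Gaussian weight. -/
lemma integral_wick {n : ℕ} (X Y : Fin n → ι) :
    ∫ φ : ι → ℂ, (∏ i, (conj (φ (X i)) * φ (Y i))) * (Real.exp (-sqNorm φ) : ℂ)
      = (π : ℂ) ^ Fintype.card ι *
        ∑ g : Equiv.Perm (Fin n), (if X = Y ∘ g then (1 : ℂ) else 0) := by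
  simp_rw [wick_prod]
  rw [integral_fintype_prod_volume_eq_prod
    (f := fun x z => conj z ^ occ X x * z ^ occ Y x * (Real.exp (-Complex.normSq z) : ℂ))]
  simp_rw [integral_mono_gauss]
  rw [card_perm_comp]
  split_ifs with h
  · rw [h]
    simp [Finset.prod_mul_distrib]
  · have : ∃ x, occ X x ≠ occ Y x := by
      by_contra hh
      push Not at hh
      exact h (funext fun x => (hh x).symm)
    obtain ⟨x, hx⟩ := this
    rw [Finset.prod_eq_zero (Finset.mem_univ x) (if_neg hx), mul_zero]

end Wick

/-! ### The coherent-state formula for traces of symmetrized tensor powers -/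

section Coherent
variable {ι : Type*} [Fintype ι]

lemma sqNorm_nonneg (φ : ι → ℂ) : 0 ≤ sqNorm φ :=
  Finset.sum_nonneg fun _ _ => Complex.normSq_nonneg _

lemma continuous_sqNorm : Continuous (sqNorm : (ι → ℂ) → ℝ) := by
  unfold sqNorm
  have := Complex.continuous_normSq
  fun_prop

lemma continuous_quadForm (M : Matrix ι ι ℂ) : Continuous (quadForm M) := by
  unfold quadForm Matrix.mulVec dotProduct
  fun_prop

lemma integral_exp_sqNorm_one {c : ℝ} (hc : 0 < c) :
    ∫ z : ℂ, Real.exp (-c * Complex.normSq z) = π / c := by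
  have h := Complex.integral_exp_neg_mul_rpow (p := 2) (b := c) (by norm_num) hc
  have e : ∀ z : ℂ, Real.exp (-c * Complex.normSq z) = Real.exp (-c * ‖z‖ ^ (2 : ℝ)) := by
    intro z
    rw [Complex.normSq_eq_norm_sq]
    norm_cast
  simp_rw [e]
  rw [h]
  norm_num
  rw [Real.rpow_neg_one]
  field_simp

lemma exp_sqNorm_prod (c : ℝ) (φ : ι → ℂ) :
    Real.exp (-c * sqNorm φ) = ∏ x, Real.exp (-c * Complex.normSq (φ x)) := by
  rw [sqNorm, Finset.mul_sum, Real.exp_sum]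

lemma integral_exp_sqNorm {c : ℝ} (hc : 0 < c) :
    ∫ φ : ι → ℂ, Real.exp (-c * sqNorm φ) = (π / c) ^ Fintype.card ι := by
  simp_rw [exp_sqNorm_prod]
  rw [integral_fintype_prod_volume_eq_prod (f := fun _ z => Real.exp (-c * Complex.normSq z))]
  rw [Finset.prod_const, integral_exp_sqNorm_one hc, Finset.card_univ]

lemma integrable_exp_sqNorm {c : ℝ} (hc : 0 < c) :
    Integrable (fun φ : ι → ℂ => Real.exp (-c * sqNorm φ)) := by
  apply Integrable.of_integral_ne_zero
  rw [integral_exp_sqNorm hc]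
  have := Real.pi_pos
  positivity

lemma quadForm_eq_sum (M : Matrix ι ι ℂ) (φ : ι → ℂ) :
    quadForm M φ = ∑ p : ι × ι, M p.1 p.2 * (conj (φ p.1) * φ p.2) := by
  rw [quadForm, Fintype.sum_prod_type]
  refine Finset.sum_congr rfl fun x _ => ?_
  rw [Matrix.mulVec, dotProduct, Finset.mul_sum]
  refine Finset.sum_congr rfl fun y _ => ?_
  ring

lemma quadForm_pow (M : Matrix ι ι ℂ) (φ : ι → ℂ) (n : ℕ) :
    quadForm M φ ^ n = ∑ X : Fin n → ι, ∑ Y : Fin n → ι,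
      tensPow M n X Y * ∏ i, (conj (φ (X i)) * φ (Y i)) := by
  rw [quadForm_eq_sum, Fintype.sum_pow, ← Fintype.sum_prod_type']
  refine Fintype.sum_equiv (Equiv.arrowProdEquivProdArrow (Fin n) (fun _ => ι) (fun _ => ι)) _ _
    fun p => ?_
  simp [tensPow, Finset.prod_mul_distrib, Equiv.arrowProdEquivProdArrow]

variable [DecidableEq ι]

lemma integral_coherent_term (M : Matrix ι ι ℂ) (n : ℕ) :
    ∫ φ : ι → ℂ, ((Nat.factorial n : ℂ)⁻¹ * quadForm M φ ^ n) * (Real.exp (-sqNorm φ) : ℂ)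
      = (π : ℂ) ^ Fintype.card ι * (tensPow M n * symMat ι n).trace := by
  have e : ∀ φ : ι → ℂ, ((Nat.factorial n : ℂ)⁻¹ * quadForm M φ ^ n) * (Real.exp (-sqNorm φ) : ℂ)
      = ∑ X : Fin n → ι, ∑ Y : Fin n → ι, ((Nat.factorial n : ℂ)⁻¹ * tensPow M n X Y) *
        ((∏ i, (conj (φ (X i)) * φ (Y i))) * (Real.exp (-sqNorm φ) : ℂ)) := by
    intro φ
    rw [quadForm_pow, Finset.mul_sum, Finset.sum_mul]
    refine Finset.sum_congr rfl fun X _ => ?_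
    rw [Finset.mul_sum, Finset.sum_mul]
    refine Finset.sum_congr rfl fun Y _ => ?_
    ring
  simp_rw [e]
  rw [integral_finsetSum _ fun X _ => integrable_finsetSum _ fun Y _ =>
    (integrable_wick X Y).const_mul _]
  simp_rw [integral_finsetSum _ fun Y _ => (integrable_wick _ Y).const_mul _, integral_const_mul,
    integral_wick]
  rw [Matrix.trace, Finset.mul_sum]
  refine Finset.sum_congr rfl fun X _ => ?_
  rw [Matrix.diag_apply, Matrix.mul_apply, Finset.mul_sum]
  refine Finset.sum_congr rfl fun Y _ => ?_
  rw [symMat]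
  ring

/-- Expanding the Gaussian integral of `e^{⟨φ, Mφ⟩}` in powers of `M` produces the traces of the
symmetrized tensor powers of `M`, provided that `M` is a strict contraction in the sense of its
sesquilinear form. -/
lemma hasSum_coherent (M : Matrix ι ι ℂ) {r : ℝ} (hr1 : r < 1)
    (hM : ∀ φ, ‖quadForm M φ‖ ≤ r * sqNorm φ) :
    HasSum (fun n => (π : ℂ) ^ Fintype.card ι * (tensPow M n * symMat ι n).trace)
      (∫ φ : ι → ℂ, Complex.exp (quadForm M φ - sqNorm φ)) := by
  simp_rw [← integral_coherent_term]
  have hexp : ∀ x : ℝ, HasSum (fun n : ℕ => (Nat.factorial n : ℝ)⁻¹ * x ^ n) (Real.exp x) := by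
    intro x
    rw [Real.exp_eq_exp_ℝ]
    simpa using NormedSpace.exp_series_hasSum_exp' (𝕂 := ℝ) x
  have hcexp : ∀ x : ℂ, HasSum (fun n : ℕ => (Nat.factorial n : ℂ)⁻¹ * x ^ n) (Complex.exp x) := by
    intro x
    rw [Complex.exp_eq_exp_ℂ]
    simpa using NormedSpace.exp_series_hasSum_exp' (𝕂 := ℂ) x
  have hb : ∀ φ : ι → ℂ, HasSum (fun n : ℕ =>
      ((Nat.factorial n : ℝ)⁻¹ * (r * sqNorm φ) ^ n) * Real.exp (-sqNorm φ))
      (Real.exp (-(1 - r) * sqNorm φ)) := by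
    intro φ
    have := (hexp (r * sqNorm φ)).mul_right (Real.exp (-sqNorm φ))
    rw [← Real.exp_add] at this
    rwa [show r * sqNorm φ + -sqNorm φ = -(1 - r) * sqNorm φ by ring] at this
  refine hasSum_integral_of_dominated_convergence
    (fun n φ => ((Nat.factorial n : ℝ)⁻¹ * (r * sqNorm φ) ^ n) * Real.exp (-sqNorm φ))
    (fun n => ?_) (fun n => Eventually.of_forall fun φ => ?_)
    (Eventually.of_forall fun φ => (hb φ).summable) ?_ (Eventually.of_forall fun φ => ?_)
  · have h1 := continuous_quadForm M
    have h2 := continuous_sqNorm (ι := ι)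
    have : Continuous (fun φ : ι → ℂ =>
      ((Nat.factorial n : ℂ)⁻¹ * quadForm M φ ^ n) * (Real.exp (-sqNorm φ) : ℂ)) := by fun_prop
    exact this.aestronglyMeasurable
  · rw [norm_mul, norm_mul, norm_pow, Complex.norm_real, Real.norm_of_nonneg (Real.exp_nonneg _),
      norm_inv, Complex.norm_natCast]
    gcongr
    exact hM φ
  · simp_rw [fun φ : ι → ℂ => (hb φ).tsum_eq]
    exact integrable_exp_sqNorm (by linarith)
  · have := (hcexp (quadForm M φ)).mul_right (Real.exp (-sqNorm φ) : ℂ)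
    rw [Complex.ofReal_exp, ← Complex.exp_add] at this
    simpa [sub_eq_add_neg] using this

/-- Generating function of the dimensions of the bosonic `n`-particle spaces. -/
lemma hasSum_trace_symMat {z : ℝ} (hz0 : 0 ≤ z) (hz1 : z < 1) :
    HasSum (fun n => (z : ℂ) ^ n * (symMat ι n).trace)
      (((1 / (1 - z)) ^ Fintype.card ι : ℝ) : ℂ) := by
  have hq : ∀ φ : ι → ℂ, quadForm ((z : ℂ) • (1 : Matrix ι ι ℂ)) φ = ((z * sqNorm φ : ℝ) : ℂ) := by
    intro φ
    rw [quadForm, sqNorm, Finset.mul_sum]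
    push_cast
    refine Finset.sum_congr rfl fun x _ => ?_
    rw [Matrix.smul_mulVec, Matrix.one_mulVec, Complex.normSq_eq_conj_mul_self, Pi.smul_apply,
      smul_eq_mul]
    ring
  have h := hasSum_coherent (ι := ι) ((z : ℂ) • (1 : Matrix ι ι ℂ)) hz1 (fun φ => by
    rw [hq, Complex.norm_real, Real.norm_of_nonneg (mul_nonneg hz0 (sqNorm_nonneg φ))])
  have hint : (∫ φ : ι → ℂ, Complex.exp (quadForm ((z : ℂ) • (1 : Matrix ι ι ℂ)) φ - sqNorm φ))
      = (((π / (1 - z)) ^ Fintype.card ι : ℝ) : ℂ) := by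
    rw [← integral_exp_sqNorm (by linarith : (0 : ℝ) < 1 - z), ← integral_complex_ofReal]
    congr 1
    funext φ
    rw [hq, ← Complex.ofReal_sub, ← Complex.ofReal_exp]
    congr 2
    ring
  rw [hint] at h
  have hpi : (π : ℂ) ≠ 0 := by exact_mod_cast Real.pi_ne_zero
  have h2 := h.mul_left ((π : ℂ) ^ Fintype.card ι)⁻¹
  convert! h2 using 1
  · funext n
    rw [inv_mul_cancel_left₀ (pow_ne_zero _ hpi)]
    have : tensPow ((z : ℂ) • (1 : Matrix ι ι ℂ)) n = (z : ℂ) ^ n • 1 := by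
      ext X Y
      simp only [tensPow, Matrix.of_apply, Matrix.smul_apply, smul_eq_mul, Finset.prod_mul_distrib,
        Finset.prod_const, Finset.card_univ, Fintype.card_fin]
      congr 1
      by_cases hXY : X = Y
      · subst hXY; simp
      · rw [Matrix.one_apply_ne hXY]
        obtain ⟨i, hi⟩ := Function.ne_iff.mp hXY
        exact Finset.prod_eq_zero (Finset.mem_univ i) (Matrix.one_apply_ne hi)
    rw [this, Matrix.smul_mul, Matrix.one_mul, Matrix.trace_smul, smul_eq_mul]
  · push_cast
    rw [div_pow, div_pow, one_pow]
    field_simp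

end Coherent

/-! ### Matrices with the maximal row sum norm -/

section Norms

attribute [local instance] Matrix.linftyOpNormedRing Matrix.linftyOpNormedAlgebra

variable {m : Type*} [Fintype m] [DecidableEq m]

lemma sum_row_le_norm (A : Matrix m m ℂ) (x : m) : ∑ y, ‖A x y‖ ≤ ‖A‖ := by
  rw [Matrix.linfty_opNorm_def]
  have h : (∑ y, ‖A x y‖₊) ≤ Finset.univ.sup fun i => ∑ j, ‖A i j‖₊ :=
    Finset.le_sup (f := fun i => ∑ j, ‖A i j‖₊) (Finset.mem_univ x)
  have h2 := NNReal.coe_le_coe.mpr h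
  push_cast at h2
  exact h2

lemma norm_le_of_sum_row {A : Matrix m m ℂ} {C : ℝ} (hC : 0 ≤ C)
    (h : ∀ x, ∑ y, ‖A x y‖ ≤ C) : ‖A‖ ≤ C := by
  rw [Matrix.linfty_opNorm_def]
  lift C to NNReal using hC
  rw [NNReal.coe_le_coe]
  refine Finset.sup_le fun x _ => ?_
  rw [← NNReal.coe_le_coe]
  push_cast
  exact h x

lemma matExp_eq_exp (A : Matrix m m ℂ) : matExp A = NormedSpace.exp A := by
  have h := NormedSpace.exp_series_hasSum_exp' (𝕂 := ℂ) A
  ext x y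
  have h1 : HasSum (fun n : ℕ => (((Nat.factorial n : ℂ)⁻¹) • A ^ n) x y)
      (NormedSpace.exp A x y) :=
    h.map (Matrix.entryAddMonoidHom ℂ x y) (by
      have : Continuous fun B : Matrix m m ℂ => B x y := by fun_prop
      exact this)
  exact h1.tsum_eq

lemma norm_exp_matrix_le [Nonempty m] (A : Matrix m m ℂ) :
    ‖NormedSpace.exp A‖ ≤ Real.exp ‖A‖ := by
  have h := NormedSpace.exp_series_hasSum_exp' (𝕂 := ℂ) A
  have h2 := NormedSpace.exp_series_hasSum_exp' (𝕂 := ℝ) ‖A‖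
  rw [← Real.exp_eq_exp_ℝ] at h2
  have hE : NormedSpace.exp A = ∑' n : ℕ, ((Nat.factorial n : ℂ)⁻¹) • A ^ n := h.tsum_eq.symm
  rw [hE]
  refine tsum_of_norm_bounded h2 fun n => ?_
  rw [norm_smul, norm_inv, Complex.norm_natCast, smul_eq_mul]
  gcongr
  rcases Nat.eq_zero_or_pos n with rfl | hn
  · simp
  · exact norm_pow_le' A hn

/-- If `G + c` has norm at most `c`, then `G` generates a contraction semigroup. -/
lemma norm_exp_smul_le_one [Nonempty m] {G : Matrix m m ℂ} {c : ℝ}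
    (hG : ‖G + (c : ℂ) • (1 : Matrix m m ℂ)‖ ≤ c) {s : ℝ} (hs : 0 ≤ s) :
    ‖NormedSpace.exp (s • G)‖ ≤ 1 := by
  have e : s • G = s • (G + (c : ℂ) • (1 : Matrix m m ℂ)) + ((-(s * c) : ℝ) : ℂ) • 1 := by
    ext x y
    simp
    ring
  have e2 : NormedSpace.exp (((-(s * c) : ℝ) : ℂ) • (1 : Matrix m m ℂ))
      = ((Real.exp (-(s * c)) : ℝ) : ℂ) • 1 := by
    have := NormedSpace.algebraMap_exp_comm (𝕂 := ℂ) (𝔸 := Matrix m m ℂ) ((-(s * c) : ℝ) : ℂ)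
    rw [Algebra.algebraMap_eq_smul_one, Algebra.algebraMap_eq_smul_one] at this
    refine this.symm.trans ?_
    rw [← Complex.exp_eq_exp_ℂ, Complex.ofReal_exp]
  rw [e, Matrix.exp_add_of_commute _ _ ((Commute.one_right _).smul_right _), e2,
    mul_smul_comm, mul_one, norm_smul, Complex.norm_real,
    Real.norm_of_nonneg (Real.exp_nonneg _)]
  calc Real.exp (-(s * c)) * ‖NormedSpace.exp (s • (G + (c : ℂ) • (1 : Matrix m m ℂ)))‖
      ≤ Real.exp (-(s * c)) * Real.exp (s * c) := by
        gcongr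
        refine (norm_exp_matrix_le _).trans (Real.exp_le_exp.mpr ?_)
        rw [norm_smul, Real.norm_of_nonneg hs]
        gcongr
    _ = 1 := by rw [← Real.exp_add]; simp

lemma norm_exp_sub_one_le [Nonempty m] {G : Matrix m m ℂ} {c : ℝ}
    (hG : ‖G + (c : ℂ) • (1 : Matrix m m ℂ)‖ ≤ c) {s : ℝ} (hs : 0 ≤ s) (hs1 : s ≤ 1) :
    ‖NormedSpace.exp (s • G) - 1‖ ≤ ‖G‖ := by
  have h := norm_image_sub_le_of_norm_deriv_le_segment_01' (C := ‖G‖)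
    (f := fun u : ℝ => NormedSpace.exp (u • (s • G)))
    (f' := fun u : ℝ => (s • G) * NormedSpace.exp (u • (s • G)))
    (fun u _ => (hasDerivAt_exp_smul_const' (𝕂 := ℝ) (s • G) u).hasDerivWithinAt)
    (fun u hu => by
      have h1 : ‖NormedSpace.exp (u • (s • G))‖ ≤ 1 := by
        rw [smul_smul]; exact norm_exp_smul_le_one hG (mul_nonneg hu.1 hs)
      calc ‖(s • G) * NormedSpace.exp (u • (s • G))‖ ≤ ‖s • G‖ * 1 :=
            (norm_mul_le _ _).trans (by gcongr)
        _ = s * ‖G‖ := by rw [mul_one, norm_smul, Real.norm_of_nonneg hs]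
        _ ≤ 1 * ‖G‖ := by gcongr
        _ = ‖G‖ := one_mul _)
  simpa using h

lemma hasDerivAt_matrix {f : ℝ → Matrix m m ℂ} {f' : Matrix m m ℂ} {s : ℝ}
    (h : ∀ x y, HasDerivAt (fun u => f u x y) (f' x y) s) : HasDerivAt f f' s := by
  have e : ∀ B : Matrix m m ℂ, B = ∑ x, ∑ y, B x y • Matrix.single x y (1 : ℂ) := by
    intro B
    conv_lhs => rw [Matrix.matrix_eq_sum_single B]
    simp [Matrix.smul_single]
  have h2 : HasDerivAt (fun u => ∑ x, ∑ y, f u x y • Matrix.single x y (1 : ℂ))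
      (∑ x, ∑ y, f' x y • Matrix.single x y (1 : ℂ)) s :=
    HasDerivAt.fun_sum fun x _ => HasDerivAt.fun_sum fun y _ => (h x y).smul_const _
  rw [← e] at h2
  simpa only [← e] using h2

/-- Duhamel's estimate: `e^{T - D}` differs from `F(1) e^{-D}`, where `F` solves `F' = T F`, by at
most the size of the commutators of `D` with `F(s)`. -/
lemma norm_duhamel_le [Nonempty m] {T D : Matrix m m ℂ} {F : ℝ → Matrix m m ℂ} {C c c' : ℝ}
    (hF0 : F 0 = 1) (hF : ∀ s, HasDerivAt F (T * F s) s)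
    (hG : ‖(T - D) + (c : ℂ) • (1 : Matrix m m ℂ)‖ ≤ c)
    (hD : ‖(-D) + (c' : ℂ) • (1 : Matrix m m ℂ)‖ ≤ c')
    (hcomm : ∀ s, 0 ≤ s → s ≤ 1 → ‖D * F s - F s * D‖ ≤ C) :
    ‖F 1 * NormedSpace.exp (-D) - NormedSpace.exp (T - D)‖ ≤ C := by
  have hder : ∀ s : ℝ, HasDerivAt
      (fun u : ℝ => NormedSpace.exp ((1 - u) • (T - D)) * F u * NormedSpace.exp (u • (-D)))
      (NormedSpace.exp ((1 - s) • (T - D)) * (D * F s - F s * D) * NormedSpace.exp (s • (-D))) s := by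
    intro s
    have h1 : HasDerivAt (fun u : ℝ => NormedSpace.exp ((1 - u) • (T - D)))
        ((-1 : ℝ) • (NormedSpace.exp ((1 - s) • (T - D)) * (T - D))) s :=
      (hasDerivAt_exp_smul_const (𝕂 := ℝ) (T - D) (1 - s)).scomp s
        ((hasDerivAt_id s).const_sub 1)
    have h3 := hasDerivAt_exp_smul_const' (𝕂 := ℝ) (-D) s
    convert! (h1.fun_mul (hF s)).fun_mul h3 using 1
    simp only [neg_smul, one_smul]
    noncomm_ring
  have h := norm_image_sub_le_of_norm_deriv_le_segment_01' (C := C)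
    (fun u _ => (hder u).hasDerivWithinAt)
    (fun u hu => by
      have h1 := norm_exp_smul_le_one hG (s := 1 - u) (by linarith [hu.2])
      have h2 := norm_exp_smul_le_one hD (s := u) hu.1
      have h3 := hcomm u hu.1 hu.2.le
      calc _ ≤ ‖NormedSpace.exp ((1 - u) • (T - D))‖ * ‖D * F u - F u * D‖
            * ‖NormedSpace.exp (u • (-D))‖ :=
            (norm_mul_le _ _).trans (by gcongr; exact norm_mul_le _ _)
        _ ≤ 1 * ‖D * F u - F u * D‖ * 1 := by gcongr
        _ ≤ C := by simpa using h3)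
  simpa [hF0] using h

end Norms

/-! ### Many-body generators, tensor powers and the Trotter error -/

section ManyBody

attribute [local instance] Matrix.linftyOpNormedRing Matrix.linftyOpNormedAlgebra

variable {ι : Type*} [Fintype ι] [DecidableEq ι]

/-- The sum over `i` of the one-particle operator `A` acting on the `i`-th variable. -/
def liftSum (A : Matrix ι ι ℂ) (n : ℕ) : Matrix (Fin n → ι) (Fin n → ι) ℂ :=
  fun X Y => ∑ i : Fin n, (if ∀ j : Fin n, j ≠ i → X j = Y j then A (X i) (Y i) else 0)

/-- The dimension of the bosonic `n`-particle space over `ι`, as the trace of the projection. -/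
def dimSym (ι : Type*) [Fintype ι] [DecidableEq ι] (n : ℕ) : ℝ := (symMat ι n).trace.re

lemma sum_agree {E : Type*} [AddCommMonoid E] {n : ℕ} (X : Fin n → ι) (i : Fin n)
    (g : (Fin n → ι) → E) :
    ∑ Y, (if ∀ j : Fin n, j ≠ i → X j = Y j then g Y else 0)
      = ∑ y, g (Function.update X i y) := by
  rw [← Finset.sum_filter]
  have key : ∀ Y : Fin n → ι, (∀ j : Fin n, j ≠ i → X j = Y j) →
      Function.update X i (Y i) = Y := by
    intro Y hY
    funext j
    by_cases hj : j = i
    · subst hj; simp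
    · rw [Function.update_of_ne hj]; exact hY j hj
  refine Finset.sum_nbij' (fun Y => Y i) (fun y => Function.update X i y) ?_ ?_ ?_ ?_ ?_
  · intros; simp
  · intro y _
    simp only [Finset.mem_filter, Finset.mem_univ, true_and]
    intro j hj
    rw [Function.update_of_ne hj]
  · intro Y hY
    simp only [Finset.mem_filter, Finset.mem_univ, true_and] at hY
    exact key Y hY
  · intro y _; simp
  · intro Y hY
    simp only [Finset.mem_filter, Finset.mem_univ, true_and] at hY
    rw [key Y hY]

lemma liftSum_add_smul_one (A : Matrix ι ι ℂ) (n : ℕ) (c : ℂ) :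
    liftSum (A + c • 1) n = liftSum A n + ((n : ℂ) * c) • 1 := by
  ext X Y
  have h : ∀ i : Fin n, (if ∀ j : Fin n, j ≠ i → X j = Y j then (A + c • 1) (X i) (Y i) else 0)
      = (if ∀ j : Fin n, j ≠ i → X j = Y j then A (X i) (Y i) else 0)
        + c * (1 : Matrix (Fin n → ι) (Fin n → ι) ℂ) X Y := by
    intro i
    by_cases hXY : X = Y
    · subst hXY; simp
    · rw [Matrix.one_apply_ne hXY]
      split_ifs with hh
      · have : X i ≠ Y i := by
          intro hi
          apply hXY
          funext j
          by_cases hj : j = i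
          · rw [hj, hi]
          · exact hh j hj
        simp [Matrix.one_apply_ne this]
      · simp
  simp only [liftSum, Matrix.add_apply, Matrix.smul_apply, smul_eq_mul]
  simp only [Matrix.add_apply, Matrix.smul_apply, smul_eq_mul] at h
  rw [Finset.sum_congr rfl fun i _ => h i, Finset.sum_add_distrib]
  simp [mul_assoc]

lemma norm_liftSum_le (A : Matrix ι ι ℂ) (n : ℕ) : ‖liftSum A n‖ ≤ n * ‖A‖ := by
  refine norm_le_of_sum_row (by positivity) fun X => ?_
  calc ∑ Y, ‖liftSum A n X Y‖
      ≤ ∑ Y : Fin n → ι, ∑ i : Fin n, (if ∀ j : Fin n, j ≠ i → X j = Y j then ‖A (X i) (Y i)‖ else 0) := by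
        refine Finset.sum_le_sum fun Y _ => (norm_sum_le _ _).trans ?_
        refine Finset.sum_le_sum fun i _ => ?_
        split_ifs <;> simp
    _ = ∑ i : Fin n, ∑ y, ‖A (X i) y‖ := by
        rw [Finset.sum_comm]
        refine Finset.sum_congr rfl fun i _ => ?_
        rw [sum_agree X i (fun Y => ‖A (X i) (Y i)‖)]
        simp
    _ ≤ ∑ i : Fin n, ‖A‖ := Finset.sum_le_sum fun i _ => sum_row_le_norm A (X i)
    _ = n * ‖A‖ := by simp

lemma tensPow_one (n : ℕ) : tensPow (1 : Matrix ι ι ℂ) n = 1 := by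
  ext X Y
  simp only [tensPow, Matrix.of_apply]
  by_cases hXY : X = Y
  · subst hXY; simp
  · rw [Matrix.one_apply_ne hXY]
    obtain ⟨i, hi⟩ := Function.ne_iff.mp hXY
    exact Finset.prod_eq_zero (Finset.mem_univ i) (Matrix.one_apply_ne hi)

lemma liftSum_mul_tensPow (A K : Matrix ι ι ℂ) (n : ℕ) (X Y : Fin n → ι) :
    (liftSum A n * tensPow K n) X Y
      = ∑ i, (∏ j ∈ Finset.univ.erase i, K (X j) (Y j)) * (A * K) (X i) (Y i) := by
  simp only [Matrix.mul_apply, liftSum, Finset.sum_mul]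
  rw [Finset.sum_comm]
  refine Finset.sum_congr rfl fun i _ => ?_
  simp only [ite_mul, zero_mul]
  rw [sum_agree X i (fun Z => A (X i) (Z i) * tensPow K n Z Y), Finset.mul_sum]
  refine Finset.sum_congr rfl fun y _ => ?_
  simp only [tensPow, Matrix.of_apply, Function.update_self]
  rw [← Finset.mul_prod_erase Finset.univ _ (Finset.mem_univ i), Function.update_self]
  rw [Finset.prod_congr rfl (g := fun j => K (X j) (Y j))]
  · ring
  · intro j hj
    rw [Function.update_of_ne (Finset.ne_of_mem_erase hj)]

/-- Tensor powers of a one-particle semigroup solve the many-body evolution equation. -/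
lemma hasDerivAt_tensPow (A : Matrix ι ι ℂ) (n : ℕ) (s : ℝ) :
    HasDerivAt (fun u : ℝ => tensPow (NormedSpace.exp (u • A)) n)
      (liftSum A n * tensPow (NormedSpace.exp (s • A)) n) s := by
  refine hasDerivAt_matrix fun X Y => ?_
  rw [liftSum_mul_tensPow]
  have h := hasDerivAt_exp_smul_const' (𝕂 := ℝ) A s
  have hent : ∀ x y, HasDerivAt (fun u : ℝ => NormedSpace.exp (u • A) x y)
      ((A * NormedSpace.exp (s • A)) x y) s := by
    intro x y
    let ℓ : Matrix ι ι ℂ →L[ℝ] ℂ := LinearMap.toContinuousLinearMap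
      { toFun := fun B => B x y, map_add' := fun _ _ => rfl, map_smul' := fun _ _ => rfl }
    exact ℓ.hasFDerivAt.comp_hasDerivAt s h
  have := HasDerivAt.fun_finsetProd (u := Finset.univ)
    (f := fun (i : Fin n) (u : ℝ) => NormedSpace.exp (u • A) (X i) (Y i))
    (fun i _ => hent (X i) (Y i))
  simpa [tensPow] using this

lemma sum_prod_row {n : ℕ} (k : Fin n → ι → ℝ) :
    ∑ Y : Fin n → ι, ∏ i, k i (Y i) = ∏ i, ∑ y, k i y := by
  rw [Finset.prod_univ_sum, Fintype.piFinset_univ]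

/-- A diagonal observable that changes by at most `b` per displaced particle nearly commutes with
the tensor power of a kernel close to the identity. -/
lemma norm_commutator_le {n : ℕ} (δ : (Fin n → ι) → ℝ) {b ε : ℝ} (hb : 0 ≤ b)
    (hδ : ∀ X Y, |δ X - δ Y| ≤ b * ∑ i, (if X i = Y i then 0 else 1))
    {K : Matrix ι ι ℂ} (hK : ‖K‖ ≤ 1) (hK1 : ‖K - 1‖ ≤ ε) :
    ‖Matrix.diagonal (fun X => (δ X : ℂ)) * tensPow K n
      - tensPow K n * Matrix.diagonal (fun X => (δ X : ℂ))‖ ≤ b * n * ε := by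
  have hε : 0 ≤ ε := (norm_nonneg _).trans hK1
  refine norm_le_of_sum_row (by positivity) fun X => ?_
  have h1 : ∀ Y, ‖(Matrix.diagonal (fun X => (δ X : ℂ)) * tensPow K n
      - tensPow K n * Matrix.diagonal (fun X => (δ X : ℂ))) X Y‖
      ≤ ∑ i, b * ∏ j, (if j = i then (if X j = Y j then 0 else ‖K (X j) (Y j)‖)
          else ‖K (X j) (Y j)‖) := by
    intro Y
    rw [Matrix.sub_apply, Matrix.diagonal_mul, Matrix.mul_diagonal, mul_comm (tensPow K n X Y),
      ← sub_mul, norm_mul, ← Complex.ofReal_sub, Complex.norm_real, Real.norm_eq_abs]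
    refine (mul_le_mul_of_nonneg_right (hδ X Y) (norm_nonneg _)).trans ?_
    rw [Finset.mul_sum, Finset.sum_mul]
    refine Finset.sum_le_sum fun i _ => ?_
    rw [mul_assoc]
    refine mul_le_mul_of_nonneg_left ?_ hb
    rw [tensPow, Matrix.of_apply, norm_prod]
    by_cases hi : X i = Y i
    · rw [if_pos hi, zero_mul]
      refine Finset.prod_nonneg fun j _ => ?_
      split_ifs <;> positivity
    · rw [if_neg hi, one_mul]
      refine (Finset.prod_congr rfl fun j _ => ?_).le
      by_cases hj : j = i
      · subst hj; simp [hi]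
      · simp [hj]
  calc _ ≤ ∑ Y : Fin n → ι, ∑ i, b * ∏ j, (if j = i then (if X j = Y j then 0 else ‖K (X j) (Y j)‖)
          else ‖K (X j) (Y j)‖) := Finset.sum_le_sum fun Y _ => h1 Y
    _ = ∑ i, b * ∏ j, ∑ y, (if j = i then (if X j = y then 0 else ‖K (X j) y‖)
          else ‖K (X j) y‖) := by
        rw [Finset.sum_comm]
        refine Finset.sum_congr rfl fun i _ => ?_
        rw [← Finset.mul_sum]
        congr 1
        exact sum_prod_row (fun j y => if j = i then (if X j = y then 0 else ‖K (X j) y‖)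
          else ‖K (X j) y‖)
    _ ≤ ∑ i : Fin n, b * ε := by
        refine Finset.sum_le_sum fun i _ => mul_le_mul_of_nonneg_left ?_ hb
        rw [← Finset.mul_prod_erase Finset.univ _ (Finset.mem_univ i)]
        have hA : ∑ y, (if i = i then (if X i = y then 0 else ‖K (X i) y‖) else ‖K (X i) y‖)
            ≤ ε := by
          refine le_trans (Finset.sum_le_sum fun y _ => ?_) ((sum_row_le_norm (K - 1) (X i)).trans hK1)
          rw [if_pos rfl]
          split_ifs with h
          · positivity
          · rw [Matrix.sub_apply, Matrix.one_apply_ne h, sub_zero]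
        have hB : ∏ j ∈ Finset.univ.erase i,
            ∑ y, (if j = i then (if X j = y then 0 else ‖K (X j) y‖) else ‖K (X j) y‖) ≤ 1 := by
          refine Finset.prod_le_one (fun j _ => Finset.sum_nonneg fun y _ => ?_) fun j hj => ?_
          · split_ifs <;> positivity
          · simp only [if_neg (Finset.ne_of_mem_erase hj)]
            exact (sum_row_le_norm K (X j)).trans hK
        calc _ ≤ ε * 1 := mul_le_mul hA hB (Finset.prod_nonneg fun j _ =>
              Finset.sum_nonneg fun y _ => by split_ifs <;> positivity) hε
          _ = ε := mul_one _
    _ = b * n * ε := by simp; ring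

lemma symMat_diag (n : ℕ) (X : Fin n → ι) :
    symMat ι n X X = (((n.factorial : ℝ)⁻¹ * ∏ x, ((occ X x).factorial : ℝ) : ℝ) : ℂ) := by
  rw [symMat, card_perm_comp, if_pos rfl]
  push_cast
  rfl

lemma norm_symMat_le (n : ℕ) (X Y : Fin n → ι) : ‖symMat ι n Y X‖ ≤ (symMat ι n X X).re := by
  rw [symMat_diag, Complex.ofReal_re, symMat, card_perm_comp]
  split_ifs with h
  · rw [h, norm_mul, norm_inv, norm_prod]
    simp
  · simp
    positivity

lemma trace_symMat (n : ℕ) : (symMat ι n).trace = (dimSym ι n : ℂ) := by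
  apply Complex.ext
  · simp [dimSym]
  · simp only [Matrix.trace, Matrix.diag_apply, symMat_diag]
    rw [← Complex.ofReal_sum, Complex.ofReal_im, Complex.ofReal_im]

lemma dimSym_nonneg (n : ℕ) : 0 ≤ dimSym ι n := by
  rw [dimSym, Matrix.trace, Complex.re_sum]
  exact Finset.sum_nonneg fun X _ => (norm_nonneg _).trans (norm_symMat_le n X X)

/-- A symmetrized trace is at most the norm of the operator times the dimension of the bosonic
space, also for the maximal row sum norm. -/
lemma norm_trace_mul_symMat_le {n : ℕ} (E : Matrix (Fin n → ι) (Fin n → ι) ℂ) :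
    ‖(E * symMat ι n).trace‖ ≤ ‖E‖ * dimSym ι n := by
  rw [dimSym, Matrix.trace, Matrix.trace, Complex.re_sum, Finset.mul_sum]
  refine (norm_sum_le _ _).trans (Finset.sum_le_sum fun X _ => ?_)
  simp only [Matrix.diag_apply]
  rw [Matrix.mul_apply]
  calc ‖∑ Y, E X Y * symMat ι n Y X‖ ≤ ∑ Y, ‖E X Y‖ * (symMat ι n X X).re := by
        refine (norm_sum_le _ _).trans (Finset.sum_le_sum fun Y _ => ?_)
        rw [norm_mul]
        gcongr
        exact norm_symMat_le n X Y
    _ = (∑ Y, ‖E X Y‖) * (symMat ι n X X).re := by rw [Finset.sum_mul]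
    _ ≤ ‖E‖ * (symMat ι n X X).re := by
        refine mul_le_mul_of_nonneg_right (sum_row_le_norm E X)
          ((norm_nonneg _).trans (norm_symMat_le n X X))

lemma hasSum_dimSym {z : ℝ} (hz0 : 0 ≤ z) (hz1 : z < 1) :
    HasSum (fun n => z ^ n * dimSym ι n) ((1 / (1 - z)) ^ Fintype.card ι) := by
  have h := hasSum_trace_symMat (ι := ι) hz0 hz1
  simp_rw [trace_symMat, ← Complex.ofReal_pow, ← Complex.ofReal_mul] at h
  exact_mod_cast h

lemma norm_neg_diagonal_add_le {m : Type*} [Fintype m] [DecidableEq m] (δ : m → ℝ)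
    (hδ : ∀ x, 0 ≤ δ x) :
    ‖-Matrix.diagonal (fun x => (δ x : ℂ)) + ((∑ x, δ x : ℝ) : ℂ) • (1 : Matrix m m ℂ)‖
      ≤ ∑ x, δ x := by
  have h0 : 0 ≤ ∑ x, δ x := Finset.sum_nonneg fun x _ => hδ x
  have e : -Matrix.diagonal (fun x => (δ x : ℂ)) + ((∑ x, δ x : ℝ) : ℂ) • (1 : Matrix m m ℂ)
      = Matrix.diagonal (fun x => ((∑ y, δ y - δ x : ℝ) : ℂ)) := by
    rw [Matrix.smul_one_eq_diagonal, Matrix.diagonal_neg, Matrix.diagonal_add]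
    congr 1
    funext x
    push_cast
    ring
  rw [e, Matrix.linfty_opNorm_diagonal]
  refine (pi_norm_le_iff_of_nonneg h0).mpr fun x => ?_
  have := Finset.single_le_sum (fun y _ => hδ y) (Finset.mem_univ x)
  rw [Complex.norm_real, Real.norm_of_nonneg (by linarith)]
  linarith [hδ x]

/-- The symmetrized trace of `e^{T - δ}`, with `T` the many-body lift of a one-particle generator
`A` and `δ` a nonnegative multiplication operator, compared with the split product. -/
lemma norm_trace_split_le [Nonempty ι] {A : Matrix ι ι ℂ} {c : ℝ}
    (hA : ‖A + (c : ℂ) • (1 : Matrix ι ι ℂ)‖ ≤ c) {n : ℕ} (δ : (Fin n → ι) → ℝ)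
    (hδ0 : ∀ X, 0 ≤ δ X) {b : ℝ} (hb : 0 ≤ b)
    (hδ : ∀ X Y, |δ X - δ Y| ≤ b * ∑ i, (if X i = Y i then 0 else 1)) :
    ‖(tensPow (NormedSpace.exp A) n * Matrix.diagonal (fun X => (Real.exp (-δ X) : ℂ))
          * symMat ι n).trace
      - (NormedSpace.exp (liftSum A n - Matrix.diagonal (fun X => (δ X : ℂ)))
          * symMat ι n).trace‖
      ≤ b * n * ‖A‖ * dimSym ι n := by
  set D : Matrix (Fin n → ι) (Fin n → ι) ℂ := Matrix.diagonal (fun X => (δ X : ℂ)) with hDdef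
  have hexpD : NormedSpace.exp (-D) = Matrix.diagonal (fun X => (Real.exp (-δ X) : ℂ)) := by
    rw [hDdef, Matrix.diagonal_neg, Matrix.exp_diagonal]
    congr 1
    funext X
    rw [Pi.coe_exp, ← Complex.exp_eq_exp_ℂ]
    simp
  have hD := norm_neg_diagonal_add_le δ hδ0
  rw [← hDdef] at hD
  have hG : ‖(liftSum A n - D) + ((n * c + ∑ X, δ X : ℝ) : ℂ)
      • (1 : Matrix (Fin n → ι) (Fin n → ι) ℂ)‖ ≤ n * c + ∑ X, δ X := by
    have e : (liftSum A n - D) + ((n * c + ∑ X, δ X : ℝ) : ℂ)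
        • (1 : Matrix (Fin n → ι) (Fin n → ι) ℂ)
        = liftSum (A + (c : ℂ) • 1) n + (-D + ((∑ X, δ X : ℝ) : ℂ) • 1) := by
      rw [liftSum_add_smul_one]
      push_cast
      rw [add_smul]
      abel
    rw [e]
    refine (norm_add_le _ _).trans (add_le_add ?_ hD)
    exact (norm_liftSum_le _ _).trans (by gcongr)
  have h := norm_duhamel_le (F := fun u : ℝ => tensPow (NormedSpace.exp (u • A)) n)
    (C := b * n * ‖A‖) (by simp [tensPow_one]) (hasDerivAt_tensPow A n) hG hD
    (fun s hs hs1 => norm_commutator_le δ hb hδ (norm_exp_smul_le_one hA hs)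
      (norm_exp_sub_one_le hA hs hs1))
  simp only [one_smul] at h
  rw [hexpD] at h
  rw [← Matrix.trace_sub, ← Matrix.sub_mul]
  exact (norm_trace_mul_symMat_le _).trans (mul_le_mul_of_nonneg_right h (dimSym_nonneg n))

end ManyBody

/-! ### Positive type and the auxiliary Gaussian field -/

section AuxField

/-- The character `x ↦ e^{2πi ξ·x/L}` of the torus. -/
def torChar (d L : ℕ) [NeZero L] (ξ x : Tor d L) : ℂ := ∏ j, ZMod.stdAddChar (ξ j * x j)

variable {d L : ℕ} [NeZero L]

lemma torChar_eq_exp (ξ x : Tor d L) :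
    torChar d L ξ x = Complex.exp (2 * (Real.pi : ℂ) * Complex.I *
      (∑ j : Fin d, (((ξ j).val : ℕ) : ℂ) * (((x j).val : ℕ) : ℂ)) / (L : ℂ)) := by
  rw [torChar, Finset.mul_sum, Finset.sum_div, Complex.exp_sum]
  refine Finset.prod_congr rfl fun j _ => ?_
  have h : ξ j * x j = (((ξ j).val * (x j).val : ℤ) : ZMod L) := by
    push_cast
    rw [ZMod.natCast_zmod_val, ZMod.natCast_zmod_val]
  rw [h, ZMod.stdAddChar_coe]
  push_cast
  rfl

lemma torChar_add (ξ x y : Tor d L) :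
    torChar d L ξ (x + y) = torChar d L ξ x * torChar d L ξ y := by
  simp only [torChar, Pi.add_apply, mul_add, AddChar.map_add_eq_mul, Finset.prod_mul_distrib]

lemma torChar_neg (ξ x : Tor d L) : torChar d L ξ (-x) = conj (torChar d L ξ x) := by
  simp only [torChar, Pi.neg_apply, mul_neg, AddChar.map_neg_eq_conj, map_prod]

lemma sum_torChar (z : Tor d L) :
    ∑ ξ, torChar d L ξ z = if z = 0 then (Fintype.card (Tor d L) : ℂ) else 0 := by
  have h : ∑ ξ, torChar d L ξ z = ∏ j : Fin d, ∑ k : ZMod L, ZMod.stdAddChar (k * z j) := by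
    rw [Finset.prod_univ_sum, Fintype.piFinset_univ]
    rfl
  rw [h]
  simp_rw [AddChar.sum_mulShift _ (ZMod.isPrimitive_stdAddChar L)]
  split_ifs with hz
  · subst hz
    simp
  · obtain ⟨j, hj⟩ := Function.ne_iff.mp hz
    refine Finset.prod_eq_zero (Finset.mem_univ j) ?_
    have hj0 : z j ≠ 0 := hj
    rw [if_neg hj0]
    simp

lemma sum_dft_normSq (v t : Tor d L → ℝ) :
    ∑ ξ, dft d L v ξ * (Complex.normSq (∑ x, (t x : ℂ) * torChar d L ξ x) : ℂ)
      = (Fintype.card (Tor d L) : ℂ) * ∑ x, ∑ y, (t x : ℂ) * (v (x - y) : ℂ) * (t y : ℂ) := by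
  have h1 : ∀ ξ, dft d L v ξ * (Complex.normSq (∑ x, (t x : ℂ) * torChar d L ξ x) : ℂ)
      = ∑ x, ∑ y, ∑ z, (t x : ℂ) * (t y : ℂ) * (v z : ℂ) * torChar d L ξ (-x + y + z) := by
    intro ξ
    have hd : dft d L v ξ = ∑ z, (v z : ℂ) * torChar d L ξ z := by
      simp only [dft, torChar_eq_exp]
    rw [hd, Complex.normSq_eq_conj_mul_self, map_sum, Finset.sum_mul_sum, mul_comm,
      Finset.sum_mul]
    refine Finset.sum_congr rfl fun x _ => ?_
    rw [Finset.sum_mul]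
    refine Finset.sum_congr rfl fun y _ => ?_
    rw [Finset.mul_sum]
    refine Finset.sum_congr rfl fun z _ => ?_
    rw [torChar_add, torChar_add, torChar_neg, map_mul, Complex.conj_ofReal]
    ring
  simp_rw [h1]
  rw [Finset.sum_comm, Finset.mul_sum]
  refine Finset.sum_congr rfl fun x _ => ?_
  rw [Finset.sum_comm, Finset.mul_sum]
  refine Finset.sum_congr rfl fun y _ => ?_
  rw [Finset.sum_comm]
  simp_rw [← Finset.mul_sum, sum_torChar]
  rw [Finset.sum_eq_single (x - y)]
  · rw [if_pos (by abel)]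
    ring
  · intro z _ hz
    rw [if_neg, mul_zero]
    intro h
    apply hz
    have : z = x - y + (-x + y + z) := by abel
    rw [this, h, add_zero]
  · simp

/-- A function of positive type defines a sum of squares of linear forms. -/
lemma exists_sum_sq {v : Tor d L → ℝ} (hv : IsPosType d L v) :
    ∃ c : (Tor d L ⊕ Tor d L) → Tor d L → ℝ, ∀ t : Tor d L → ℝ,
      ∑ x, ∑ y, t x * v (x - y) * t y = ∑ a, (∑ x, t x * c a x) ^ 2 := by
  set w : Tor d L → ℝ := fun ξ => (dft d L v ξ).re with hw
  set N : ℝ := (Fintype.card (Tor d L) : ℝ) with hN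
  have hNpos : 0 < N := by rw [hN]; exact_mod_cast Fintype.card_pos
  have hdft : ∀ ξ, dft d L v ξ = (w ξ : ℂ) := fun ξ =>
    Complex.ext (by simp [hw]) (by simp [(hv ξ).1])
  refine ⟨Sum.elim (fun ξ x => √(w ξ / N) * (torChar d L ξ x).re)
    (fun ξ x => √(w ξ / N) * (torChar d L ξ x).im), fun t => ?_⟩
  have h := sum_dft_normSq v t
  simp_rw [hdft] at h
  have h' : ∑ ξ, w ξ * Complex.normSq (∑ x, (t x : ℂ) * torChar d L ξ x)
      = N * ∑ x, ∑ y, t x * v (x - y) * t y := by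
    rw [hN]
    exact_mod_cast h
  have h2 : ∑ x, ∑ y, t x * v (x - y) * t y
      = ∑ ξ, w ξ / N * Complex.normSq (∑ x, (t x : ℂ) * torChar d L ξ x) := by
    have : ∀ ξ, w ξ / N * Complex.normSq (∑ x, (t x : ℂ) * torChar d L ξ x)
        = N⁻¹ * (w ξ * Complex.normSq (∑ x, (t x : ℂ) * torChar d L ξ x)) := fun ξ => by ring
    simp_rw [this]
    rw [← Finset.mul_sum, h', inv_mul_cancel_left₀ hNpos.ne']
  rw [h2, Fintype.sum_sum_type, ← Finset.sum_add_distrib]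
  refine Finset.sum_congr rfl fun ξ _ => ?_
  have hs : √(w ξ / N) ^ 2 = w ξ / N := Real.sq_sqrt (div_nonneg (hv ξ).2 hNpos.le)
  simp only [Sum.elim_inl, Sum.elim_inr]
  have e1 : ∑ x, t x * (√(w ξ / N) * (torChar d L ξ x).re)
      = √(w ξ / N) * (∑ x, (t x : ℂ) * torChar d L ξ x).re := by
    rw [Complex.re_sum, Finset.mul_sum]
    refine Finset.sum_congr rfl fun x _ => ?_
    rw [Complex.re_ofReal_mul]
    ring
  have e2 : ∑ x, t x * (√(w ξ / N) * (torChar d L ξ x).im)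
      = √(w ξ / N) * (∑ x, (t x : ℂ) * torChar d L ξ x).im := by
    rw [Complex.im_sum, Finset.mul_sum]
    refine Finset.sum_congr rfl fun x _ => ?_
    rw [Complex.im_ofReal_mul]
    ring
  rw [e1, e2, mul_pow, mul_pow, hs, Complex.normSq_apply]
  ring

lemma integral_gaussian_pi {α : Type*} [Fintype α] (s : α → ℝ) :
    ∫ g : α → ℝ, Complex.exp (Complex.I * ((∑ a, s a * g a : ℝ) : ℂ))
      ∂(Measure.pi fun _ => ProbabilityTheory.gaussianReal 0 1)
      = ((Real.exp (-(1 / 2) * ∑ a, s a ^ 2) : ℝ) : ℂ) := by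
  have e : ∀ g : α → ℝ, Complex.exp (Complex.I * ((∑ a, s a * g a : ℝ) : ℂ))
      = ∏ a, Complex.exp ((s a : ℂ) * (g a : ℂ) * Complex.I) := by
    intro g
    rw [← Complex.exp_sum]
    push_cast
    rw [Finset.mul_sum]
    congr 1
    refine Finset.sum_congr rfl fun a _ => ?_
    ring
  simp_rw [e]
  rw [integral_fintype_prod_eq_prod (f := fun a (u : ℝ) =>
    Complex.exp ((s a : ℂ) * (u : ℂ) * Complex.I))]
  have h : ∀ a, ∫ u : ℝ, Complex.exp ((s a : ℂ) * (u : ℂ) * Complex.I)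
      ∂(ProbabilityTheory.gaussianReal 0 1) = Complex.exp (-(s a : ℂ) ^ 2 / 2) := by
    intro a
    rw [← MeasureTheory.charFun_apply_real, ProbabilityTheory.charFun_gaussianReal]
    congr 1
    simp
    ring
  simp_rw [h]
  rw [← Complex.exp_sum]
  push_cast
  rw [Finset.mul_sum]
  congr 1
  refine Finset.sum_congr rfl fun a _ => ?_
  ring

/-- The Gaussian field with covariance `v(x - y)`, which linearizes the interaction. -/
lemma exists_aux_field {v : Tor d L → ℝ} (hv : IsPosType d L v) :
    ∃ γ : Measure (Tor d L → ℝ), IsProbabilityMeasure γ ∧ ∀ t : Tor d L → ℝ,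
      ∫ σ, Complex.exp (Complex.I * ((∑ x, t x * σ x : ℝ) : ℂ)) ∂γ
        = ((Real.exp (-(1 / 2) * ∑ x, ∑ y, t x * v (x - y) * t y) : ℝ) : ℂ) := by
  obtain ⟨c, hc⟩ := exists_sum_sq hv
  let Φ : ((Tor d L ⊕ Tor d L) → ℝ) → (Tor d L → ℝ) := fun g x => ∑ a, c a x * g a
  have hΦ : Continuous Φ := by
    refine continuous_pi fun x => ?_
    fun_prop
  refine ⟨(Measure.pi fun _ => ProbabilityTheory.gaussianReal 0 1).map Φ,
    Measure.isProbabilityMeasure_map hΦ.aemeasurable, fun t => ?_⟩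
  rw [integral_map hΦ.aemeasurable (by
    refine Continuous.aestronglyMeasurable ?_
    fun_prop), hc, ← integral_gaussian_pi]
  congr 1
  funext g
  congr 3
  simp only [Φ, Finset.mul_sum, Finset.sum_mul]
  rw [Finset.sum_comm]
  refine Finset.sum_congr rfl fun a _ => Finset.sum_congr rfl fun x _ => ?_
  ring

end AuxField

/-! ### Summation of the split series with the auxiliary field -/

section Field

variable {ι : Type*} [Fintype ι]

/-- Schur test for the quadratic form of a matrix. -/
lemma norm_quadForm_le {M : Matrix ι ι ℂ} {r : ℝ} (hrow : ∀ x, ∑ y, ‖M x y‖ ≤ r)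
    (hcol : ∀ y, ∑ x, ‖M x y‖ ≤ r) (φ : ι → ℂ) : ‖quadForm M φ‖ ≤ r * sqNorm φ := by
  rw [quadForm_eq_sum, Fintype.sum_prod_type]
  have h1 : ∀ x y, ‖M x y * (conj (φ x) * φ y)‖
      ≤ ‖M x y‖ * Complex.normSq (φ x) / 2 + ‖M x y‖ * Complex.normSq (φ y) / 2 := by
    intro x y
    rw [norm_mul, norm_mul, RCLike.norm_conj, Complex.normSq_eq_norm_sq,
      Complex.normSq_eq_norm_sq]
    nlinarith [mul_nonneg (norm_nonneg (M x y)) (sq_nonneg (‖φ x‖ - ‖φ y‖))]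
  calc ‖∑ x, ∑ y, M x y * (conj (φ x) * φ y)‖
      ≤ ∑ x, ∑ y, ‖M x y * (conj (φ x) * φ y)‖ :=
        (norm_sum_le _ _).trans (Finset.sum_le_sum fun x _ => norm_sum_le _ _)
    _ ≤ ∑ x, ∑ y, (‖M x y‖ * Complex.normSq (φ x) / 2 + ‖M x y‖ * Complex.normSq (φ y) / 2) :=
        Finset.sum_le_sum fun x _ => Finset.sum_le_sum fun y _ => h1 x y
    _ = ∑ x, (∑ y, ‖M x y‖) * (Complex.normSq (φ x) / 2)
          + ∑ y, (∑ x, ‖M x y‖) * (Complex.normSq (φ y) / 2) := by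
        simp_rw [Finset.sum_add_distrib, Finset.sum_mul]
        congr 1
        · exact Finset.sum_congr rfl fun x _ => Finset.sum_congr rfl fun y _ => by ring
        · rw [Finset.sum_comm]
          exact Finset.sum_congr rfl fun x _ => Finset.sum_congr rfl fun y _ => by ring
    _ ≤ ∑ x, r * (Complex.normSq (φ x) / 2) + ∑ y, r * (Complex.normSq (φ y) / 2) := by
        refine add_le_add (Finset.sum_le_sum fun x _ => ?_) (Finset.sum_le_sum fun x _ => ?_)
        · exact mul_le_mul_of_nonneg_right (hrow x) (by have := Complex.normSq_nonneg (φ x); positivity)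
        · exact mul_le_mul_of_nonneg_right (hcol x) (by have := Complex.normSq_nonneg (φ x); positivity)
    _ = r * sqNorm φ := by
        rw [sqNorm, ← Finset.mul_sum, ← Finset.sum_div]
        ring

variable [DecidableEq ι]

/-- The one-particle matrix `z K e^{iνσ}` in the presence of the auxiliary field `σ`. -/
def fieldMat (K : Matrix ι ι ℂ) (z ν : ℝ) (σ : ι → ℝ) : Matrix ι ι ℂ :=
  Matrix.of fun x y => (z : ℂ) * K x y * Complex.exp (Complex.I * ((ν * σ y : ℝ) : ℂ))

lemma norm_fieldMat {K : Matrix ι ι ℂ} {z ν : ℝ} (hz : 0 ≤ z) (σ : ι → ℝ) (x y : ι) :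
    ‖fieldMat K z ν σ x y‖ = z * ‖K x y‖ := by
  rw [fieldMat, Matrix.of_apply, norm_mul, norm_mul, mul_comm Complex.I, Complex.norm_exp_ofReal_mul_I, mul_one,
    Complex.norm_real, Real.norm_of_nonneg hz]

lemma norm_quadForm_fieldMat_le {K : Matrix ι ι ℂ} {z ν : ℝ} (hz : 0 ≤ z)
    (hrow : ∀ x, ∑ y, ‖K x y‖ ≤ 1) (hcol : ∀ y, ∑ x, ‖K x y‖ ≤ 1) (σ : ι → ℝ) (φ : ι → ℂ) :
    ‖quadForm (fieldMat K z ν σ) φ‖ ≤ z * sqNorm φ := by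
  refine norm_quadForm_le (fun x => ?_) (fun y => ?_) φ
  · simp_rw [norm_fieldMat hz, ← Finset.mul_sum]
    exact mul_le_of_le_one_right hz (hrow x)
  · simp_rw [norm_fieldMat hz, ← Finset.mul_sum]
    exact mul_le_of_le_one_right hz (hcol y)

section Norm
attribute [local instance] Matrix.linftyOpNormedRing Matrix.linftyOpNormedAlgebra

lemma norm_trace_tensPow_fieldMat_le {K : Matrix ι ι ℂ} {z ν : ℝ} (hz : 0 ≤ z)
    (hrow : ∀ x, ∑ y, ‖K x y‖ ≤ 1) (σ : ι → ℝ) (n : ℕ) :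
    ‖(tensPow (fieldMat K z ν σ) n * symMat ι n).trace‖ ≤ z ^ n * dimSym ι n := by
  refine (norm_trace_mul_symMat_le _).trans
    (mul_le_mul_of_nonneg_right ?_ (dimSym_nonneg n))
  refine norm_le_of_sum_row (pow_nonneg hz n) fun X => ?_
  simp only [tensPow, Matrix.of_apply, norm_prod]
  have h := sum_prod_row (fun (i : Fin n) y => ‖fieldMat K z ν σ (X i) y‖)
  rw [h]
  calc ∏ i : Fin n, ∑ y, ‖fieldMat K z ν σ (X i) y‖ ≤ ∏ _i : Fin n, z := by
        refine Finset.prod_le_prod (fun i _ => Finset.sum_nonneg fun y _ => norm_nonneg _)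
          fun i _ => ?_
        simp_rw [norm_fieldMat hz, ← Finset.mul_sum]
        exact mul_le_of_le_one_right hz (hrow _)
    _ = z ^ n := by simp

end Norm

lemma trace_mul_diagonal_mul {m : Type*} [Fintype m] [DecidableEq m] (T S : Matrix m m ℂ)
    (w : m → ℂ) : (T * diagonal w * S).trace = ∑ X, ∑ Y, T X Y * w Y * S Y X := by
  simp only [Matrix.trace, Matrix.diag]
  refine Finset.sum_congr rfl fun X _ => ?_
  rw [Matrix.mul_apply]
  simp only [Matrix.mul_diagonal]

lemma tensPow_fieldMat (K : Matrix ι ι ℂ) (z ν : ℝ) (σ : ι → ℝ) (n : ℕ) (X Y : Fin n → ι) :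
    tensPow (fieldMat K z ν σ) n X Y
      = (z : ℂ) ^ n * tensPow K n X Y * Complex.exp (Complex.I *
        ((∑ x, (ν * ∑ i, if Y i = x then 1 else 0) * σ x : ℝ) : ℂ)) := by
  have h : (∑ x, (ν * ∑ i, if Y i = x then (1 : ℝ) else 0) * σ x) = ∑ i, ν * σ (Y i) := by
    simp_rw [Finset.mul_sum, Finset.sum_mul]
    rw [Finset.sum_comm]
    refine Finset.sum_congr rfl fun i _ => ?_
    simp
  rw [h]
  simp only [tensPow, fieldMat, Matrix.of_apply, Finset.prod_mul_distrib, Finset.prod_const, Finset.card_univ,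
    Fintype.card_fin, ← Complex.exp_sum]
  push_cast
  rw [Finset.mul_sum]

/-- Averaging over the auxiliary field turns the product of one-particle phases into the pair
interaction. -/
lemma integral_trace_fieldMat {γ : Measure (ι → ℝ)} [IsProbabilityMeasure γ] {w : ι → ι → ℝ}
    (hγ : ∀ t : ι → ℝ, ∫ σ, Complex.exp (Complex.I * ((∑ x, t x * σ x : ℝ) : ℂ)) ∂γ
        = ((Real.exp (-(1 / 2) * ∑ x, ∑ y, t x * w x y * t y) : ℝ) : ℂ))
    (K : Matrix ι ι ℂ) (z ν : ℝ) (n : ℕ) :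
    ∫ σ, (tensPow (fieldMat K z ν σ) n * symMat ι n).trace ∂γ
      = (z : ℂ) ^ n * (tensPow K n * diagonal (fun X : Fin n → ι =>
        ((Real.exp (-(ν ^ 2 / 2 * ∑ i, ∑ j, w (X i) (X j))) : ℝ) : ℂ)) * symMat ι n).trace := by
  have hint : ∀ t : ι → ℝ, Integrable
      (fun σ : ι → ℝ => Complex.exp (Complex.I * ((∑ x, t x * σ x : ℝ) : ℂ))) γ := by
    intro t
    refine (integrable_const (1 : ℝ)).mono' (Continuous.aestronglyMeasurable (by fun_prop)) ?_
    refine Eventually.of_forall fun σ => ?_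
    rw [mul_comm Complex.I, Complex.norm_exp_ofReal_mul_I]
  have hquad : ∀ Y : Fin n → ι,
      ∑ x, ∑ y, (ν * ∑ i, if Y i = x then (1 : ℝ) else 0) * w x y
        * (ν * ∑ i, if Y i = y then (1 : ℝ) else 0) = ν ^ 2 * ∑ i, ∑ j, w (Y i) (Y j) := by
    intro Y
    have e : ∀ x y, (ν * ∑ i, if Y i = x then (1 : ℝ) else 0) * w x y
        * (ν * ∑ i, if Y i = y then (1 : ℝ) else 0)
        = ν ^ 2 * ∑ i, ∑ j, (if Y i = x then (1 : ℝ) else 0) * (if Y j = y then 1 else 0)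
          * w x y := by
      intro x y
      rw [show ∑ i, ∑ j, (if Y i = x then (1 : ℝ) else 0) * (if Y j = y then 1 else 0) * w x y
        = (∑ i, if Y i = x then (1 : ℝ) else 0) * (∑ j, if Y j = y then (1 : ℝ) else 0) * w x y by
          rw [Finset.sum_mul_sum, Finset.sum_mul]
          exact Finset.sum_congr rfl fun i _ => by rw [Finset.sum_mul]]
      ring
    simp_rw [e, ← Finset.mul_sum]
    congr 1
    have : ∀ x, ∑ y, ∑ i, ∑ j, (if Y i = x then (1 : ℝ) else 0) * (if Y j = y then 1 else 0)
          * w x y = ∑ i, ∑ j, (if Y i = x then (1 : ℝ) else 0) * w x (Y j) := by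
      intro x
      rw [Finset.sum_comm]
      refine Finset.sum_congr rfl fun i _ => ?_
      rw [Finset.sum_comm]
      refine Finset.sum_congr rfl fun j _ => ?_
      simp
    simp_rw [this]
    rw [Finset.sum_comm]
    refine Finset.sum_congr rfl fun i _ => ?_
    rw [Finset.sum_comm]
    refine Finset.sum_congr rfl fun j _ => ?_
    simp
  rw [trace_mul_diagonal_mul]
  simp only [Matrix.trace, Matrix.diag, Matrix.mul_apply, tensPow_fieldMat]
  rw [integral_finsetSum _ fun X _ => integrable_finsetSum _ fun Y _ =>
    ((hint _).const_mul _).mul_const _, Finset.mul_sum]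
  refine Finset.sum_congr rfl fun X _ => ?_
  rw [integral_finsetSum _ fun Y _ => ((hint _).const_mul _).mul_const _, Finset.mul_sum]
  refine Finset.sum_congr rfl fun Y _ => ?_
  rw [integral_mul_const, integral_const_mul, hγ, hquad]
  rw [show -(1 / 2) * (ν ^ 2 * ∑ i, ∑ j, w (Y i) (Y j))
    = -(ν ^ 2 / 2 * ∑ i, ∑ j, w (Y i) (Y j)) by ring]
  ring

/-- The grand canonical sum of the split products as an integral over the auxiliary field and the
coherent states. -/
lemma hasSum_split {γ : Measure (ι → ℝ)} [IsProbabilityMeasure γ] {w : ι → ι → ℝ}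
    (hγ : ∀ t : ι → ℝ, ∫ σ, Complex.exp (Complex.I * ((∑ x, t x * σ x : ℝ) : ℂ)) ∂γ
        = ((Real.exp (-(1 / 2) * ∑ x, ∑ y, t x * w x y * t y) : ℝ) : ℂ))
    {K : Matrix ι ι ℂ} {z : ℝ} (ν : ℝ) (hz0 : 0 ≤ z) (hz1 : z < 1)
    (hrow : ∀ x, ∑ y, ‖K x y‖ ≤ 1) (hcol : ∀ y, ∑ x, ‖K x y‖ ≤ 1) :
    HasSum (fun n : ℕ => (Real.pi : ℂ) ^ Fintype.card ι * ((z : ℂ) ^ n *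
        (tensPow K n * diagonal (fun X : Fin n → ι =>
        ((Real.exp (-(ν ^ 2 / 2 * ∑ i, ∑ j, w (X i) (X j))) : ℝ) : ℂ)) * symMat ι n).trace))
      (∫ σ, (∫ φ, Complex.exp (quadForm (fieldMat K z ν σ) φ - sqNorm φ)) ∂γ) := by
  simp_rw [← integral_trace_fieldMat hγ, ← integral_const_mul]
  refine hasSum_integral_of_dominated_convergence
    (fun n _ => Real.pi ^ Fintype.card ι * (z ^ n * dimSym ι n)) (fun n => ?_) (fun n => ?_)
    ?_ ?_ ?_
  · refine Continuous.aestronglyMeasurable ?_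
    simp only [Matrix.trace, Matrix.diag, Matrix.mul_apply, tensPow_fieldMat]
    fun_prop
  · refine Eventually.of_forall fun σ => ?_
    rw [norm_mul, norm_pow, Complex.norm_real, Real.norm_of_nonneg Real.pi_pos.le]
    gcongr
    exact norm_trace_tensPow_fieldMat_le hz0 hrow σ n
  · exact Eventually.of_forall fun σ => (hasSum_dimSym hz0 hz1).summable.mul_left _
  · exact integrable_const _
  · exact Eventually.of_forall fun σ =>
      hasSum_coherent _ hz1 (norm_quadForm_fieldMat_le hz0 hrow hcol σ)

end Field

/-! ### The limit of the field integral -/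

section FieldLimit

attribute [local instance] Matrix.linftyOpNormedRing Matrix.linftyOpNormedAlgebra

variable {ι : Type*} [Fintype ι] [DecidableEq ι]

lemma quadForm_smul_real (M : Matrix ι ι ℂ) (R : ℝ) (φ : ι → ℂ) :
    quadForm M (R • φ) = (R ^ 2 : ℝ) * quadForm M φ := by
  rw [quadForm_eq_sum, quadForm_eq_sum, Finset.mul_sum]
  refine Finset.sum_congr rfl fun p _ => ?_
  simp only [Pi.smul_apply, Complex.real_smul, map_mul, Complex.conj_ofReal]
  push_cast
  ring

lemma sqNorm_smul_real (R : ℝ) (φ : ι → ℂ) : sqNorm (R • φ) = R ^ 2 * sqNorm φ := by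
  rw [sqNorm, sqNorm, Finset.mul_sum]
  refine Finset.sum_congr rfl fun p _ => ?_
  simp only [Pi.smul_apply, Complex.real_smul, Complex.normSq_mul, Complex.normSq_ofReal]
  ring

/-- Rescaling of the field by `√ν`. -/
lemma integral_rescale (M : Matrix ι ι ℂ) {ν : ℝ} (hν : 0 < ν) :
    (ν : ℂ) ^ Fintype.card ι * ∫ φ, Complex.exp (quadForm M φ - sqNorm φ)
      = ∫ φ, Complex.exp ((ν : ℂ)⁻¹ * (quadForm M φ - sqNorm φ)) := by
  have hs : (√ν)⁻¹ ^ 2 = ν⁻¹ := by rw [inv_pow, Real.sq_sqrt hν.le]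
  have h := Measure.integral_comp_smul (volume : Measure (ι → ℂ))
    (fun φ => Complex.exp (quadForm M φ - sqNorm φ)) (√ν)⁻¹
  have hrank : Module.finrank ℝ (ι → ℂ) = 2 * Fintype.card ι := by
    rw [Module.finrank_pi_fintype]
    simp [Complex.finrank_real_complex, mul_comm]
  rw [hrank, pow_mul, hs, inv_pow, inv_inv, abs_of_pos (pow_pos hν _), Complex.real_smul] at h
  push_cast at h
  rw [← h]
  congr 1
  funext φ
  rw [quadForm_smul_real, sqNorm_smul_real, hs]
  congr 1
  push_cast
  ring

lemma one_sub_exp_neg_ge {x : ℝ} (hx0 : 0 ≤ x) (hx1 : x ≤ 1) : x / 2 ≤ 1 - Real.exp (-x) := by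
  have h : Real.exp (-x) ≤ 1 / (1 + x) := by
    rw [Real.exp_neg, one_div]
    exact inv_anti₀ (by linarith) (by linarith [Real.add_one_le_exp x])
  have h2 : 1 / (1 + x) ≤ 1 - x / 2 := by
    rw [div_le_iff₀ (by linarith)]
    nlinarith
  linarith

lemma transpose_exp_smul {G : Matrix ι ι ℂ} (hGs : Gᵀ = G) (s : ℝ) (x y : ι) :
    NormedSpace.exp (s • G) x y = NormedSpace.exp (s • G) y x := by
  have h : NormedSpace.exp (s • G)ᵀ = (NormedSpace.exp (s • G))ᵀ := Matrix.exp_transpose (s • G)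
  rw [Matrix.transpose_smul, hGs] at h
  exact congrFun (congrFun h x) y

lemma sum_row_exp_le [Nonempty ι] {G : Matrix ι ι ℂ} {c : ℝ} (hG : ‖G + (c : ℂ) • 1‖ ≤ c)
    {s : ℝ} (hs : 0 ≤ s) (x : ι) : ∑ y, ‖NormedSpace.exp (s • G) x y‖ ≤ 1 :=
  (sum_row_le_norm _ x).trans (norm_exp_smul_le_one hG hs)

lemma sum_col_exp_le [Nonempty ι] {G : Matrix ι ι ℂ} {c : ℝ} (hG : ‖G + (c : ℂ) • 1‖ ≤ c)
    (hGs : Gᵀ = G) {s : ℝ} (hs : 0 ≤ s) (y : ι) : ∑ x, ‖NormedSpace.exp (s • G) x y‖ ≤ 1 := by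
  simp_rw [fun x => transpose_exp_smul hGs s x y]
  exact sum_row_exp_le hG hs y

lemma hasDerivAt_exp_entry (G : Matrix ι ι ℂ) (x y : ι) :
    HasDerivAt (fun s : ℝ => NormedSpace.exp (s • G) x y) (G x y) 0 := by
  have h := hasDerivAt_exp_smul_const (𝕂 := ℝ) G (0 : ℝ)
  rw [zero_smul] at h
  have h0 : NormedSpace.exp (0 : Matrix ι ι ℂ) * G = G := by
    rw [NormedSpace.exp_zero, one_mul]
  replace h := h.congr_deriv h0
  let e : Matrix ι ι ℂ →L[ℝ] ℂ := LinearMap.toContinuousLinearMap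
    { toFun := fun M => M x y, map_add' := fun _ _ => rfl, map_smul' := fun _ _ => rfl }
  exact e.hasFDerivAt.comp_hasDerivAt (0 : ℝ) h

lemma hasDerivAt_fieldMat (G : Matrix ι ι ℂ) (κ : ℝ) (σ : ι → ℝ) (x y : ι) :
    HasDerivAt (fun ν : ℝ => fieldMat (NormedSpace.exp (ν • G)) (Real.exp (-(κ * ν))) ν σ x y)
      (G x y + (if x = y then Complex.I * σ y - κ else 0)) 0 := by
  have h1 : HasDerivAt (fun ν : ℝ => ((Real.exp (-(κ * ν)) : ℝ) : ℂ)) (((-κ : ℝ)) : ℂ) 0 := by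
    have h : HasDerivAt (fun ν : ℝ => Real.exp (-(κ * ν))) (-κ) 0 := by
      have := (((hasDerivAt_id (0 : ℝ)).const_mul κ).neg).exp
      simpa using this
    exact h.ofReal_comp
  have h3 : HasDerivAt (fun ν : ℝ => Complex.exp (Complex.I * ((ν * σ y : ℝ) : ℂ)))
      (Complex.I * σ y) 0 := by
    have h : HasDerivAt (fun ν : ℝ => ((ν * σ y : ℝ) : ℂ)) ((σ y : ℝ) : ℂ) 0 := by
      have := (hasDerivAt_id (0 : ℝ)).mul_const (σ y)
      simp only [one_mul] at this
      exact this.ofReal_comp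
    have := (h.const_mul Complex.I).cexp
    simpa using this
  have h := (h1.mul (hasDerivAt_exp_entry G x y)).mul h3
  have h0 : NormedSpace.exp ((0 : ℝ) • G) x y = (1 : Matrix ι ι ℂ) x y := by
    rw [zero_smul, NormedSpace.exp_zero]
  refine HasDerivAt.congr_deriv h ?_
  simp only [Pi.mul_apply]
  rw [h0, Matrix.one_apply]
  split_ifs <;> simp
  ring

/-- The exponent of the rescaled field integral. -/
def fieldExponent (G : Matrix ι ι ℂ) (κ ν : ℝ) (p : (ι → ℝ) × (ι → ℂ)) : ℂ :=
  (ν : ℂ)⁻¹ * (quadForm (fieldMat (NormedSpace.exp (ν • G)) (Real.exp (-(κ * ν))) ν p.1) p.2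
    - sqNorm p.2)

lemma continuous_fieldExponent (G : Matrix ι ι ℂ) (κ ν : ℝ) :
    Continuous (fieldExponent G κ ν) := by
  unfold fieldExponent
  simp only [quadForm_eq_sum, fieldMat, Matrix.of_apply]
  have := continuous_sqNorm (ι := ι)
  have := Complex.continuous_conj
  fun_prop

lemma tendsto_fieldExponent (G : Matrix ι ι ℂ) (κ : ℝ) (p : (ι → ℝ) × (ι → ℂ)) :
    Tendsto (fun ν => fieldExponent G κ ν p) (𝓝[>] 0)
      (𝓝 (quadForm (G - (κ : ℂ) • 1) p.2
        + Complex.I * ((∑ x, Complex.normSq (p.2 x) * p.1 x : ℝ) : ℂ))) := by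
  obtain ⟨σ, φ⟩ := p
  have hd : HasDerivAt (fun ν : ℝ =>
      quadForm (fieldMat (NormedSpace.exp (ν • G)) (Real.exp (-(κ * ν))) ν σ) φ)
      (∑ p : ι × ι, (G p.1 p.2 + (if p.1 = p.2 then Complex.I * σ p.2 - κ else 0))
        * (conj (φ p.1) * φ p.2)) 0 := by
    simp only [quadForm_eq_sum]
    exact HasDerivAt.fun_sum fun p _ => (hasDerivAt_fieldMat G κ σ p.1 p.2).mul_const _
  have h0 : quadForm (fieldMat (NormedSpace.exp ((0 : ℝ) • G)) (Real.exp (-(κ * 0))) 0 σ) φ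
      = sqNorm φ := by
    have : fieldMat (NormedSpace.exp ((0 : ℝ) • G)) (Real.exp (-(κ * 0))) 0 σ = 1 := by
      ext x y
      rw [zero_smul, NormedSpace.exp_zero]
      simp [fieldMat]
    rw [this]
    simp [quadForm, sqNorm, Complex.normSq_eq_conj_mul_self]
  have hval : ∑ p : ι × ι, (G p.1 p.2 + (if p.1 = p.2 then Complex.I * σ p.2 - κ else 0))
        * (conj (φ p.1) * φ p.2)
      = quadForm (G - (κ : ℂ) • 1) φ
        + Complex.I * ((∑ x, Complex.normSq (φ x) * σ x : ℝ) : ℂ) := by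
    have e : ((∑ x, Complex.normSq (φ x) * σ x : ℝ) : ℂ)
        = ∑ p : ι × ι, (if p.1 = p.2 then (σ p.2 : ℂ) else 0) * (conj (φ p.1) * φ p.2) := by
      rw [Fintype.sum_prod_type]
      push_cast
      refine Finset.sum_congr rfl fun x _ => ?_
      simp [Complex.normSq_eq_conj_mul_self, mul_comm]
    rw [e, quadForm_eq_sum, Finset.mul_sum, ← Finset.sum_add_distrib]
    refine Finset.sum_congr rfl fun p _ => ?_
    simp only [Matrix.sub_apply, Matrix.smul_apply, Matrix.one_apply, smul_eq_mul]
    split_ifs <;> ring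
  rw [hval] at hd
  have hs := (hasDerivAt_iff_tendsto_slope.mp hd).mono_left
    (nhdsWithin_mono (0 : ℝ) (fun x (hx : 0 < x) => hx.ne'))
  refine hs.congr fun ν => ?_
  rw [slope_def_module, h0, sub_zero, Complex.real_smul, fieldExponent, Complex.ofReal_inv]

lemma norm_exp_fieldExponent_le [Nonempty ι] {G : Matrix ι ι ℂ} {c κ ν : ℝ}
    (hG : ‖G + (c : ℂ) • 1‖ ≤ c) (hGs : Gᵀ = G) (hκ : 0 < κ) (hν : 0 < ν) (hκν : κ * ν ≤ 1)
    (p : (ι → ℝ) × (ι → ℂ)) :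
    ‖Complex.exp (fieldExponent G κ ν p)‖ ≤ Real.exp (-(κ / 2) * sqNorm p.2) := by
  rw [Complex.norm_exp, Real.exp_le_exp, fieldExponent, ← Complex.ofReal_inv,
    Complex.re_ofReal_mul, Complex.sub_re, Complex.ofReal_re]
  have h1 := (Complex.re_le_norm _).trans (norm_quadForm_fieldMat_le (ν := ν)
    (Real.exp_pos (-(κ * ν))).le (sum_row_exp_le hG hν.le) (sum_col_exp_le hG hGs hν.le) p.1 p.2)
  have h2 := one_sub_exp_neg_ge (mul_pos hκ hν).le hκν
  have h3 := sqNorm_nonneg p.2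
  rw [inv_mul_le_iff₀ hν]
  nlinarith

/-- The mean-field limit of the field integral. -/
lemma tendsto_field_integral [Nonempty ι] {γ : Measure (ι → ℝ)} [IsProbabilityMeasure γ]
    {w : ι → ι → ℝ}
    (hγ : ∀ t : ι → ℝ, ∫ σ, Complex.exp (Complex.I * ((∑ x, t x * σ x : ℝ) : ℂ)) ∂γ
        = ((Real.exp (-(1 / 2) * ∑ x, ∑ y, t x * w x y * t y) : ℝ) : ℂ))
    {G : Matrix ι ι ℂ} {c κ : ℝ} (hG : ‖G + (c : ℂ) • 1‖ ≤ c) (hGs : Gᵀ = G) (hκ : 0 < κ) :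
    Tendsto (fun ν : ℝ => (ν : ℂ) ^ Fintype.card ι *
        ∫ σ, (∫ φ, Complex.exp (quadForm (fieldMat (NormedSpace.exp (ν • G))
          (Real.exp (-(κ * ν))) ν σ) φ - sqNorm φ)) ∂γ) (𝓝[>] 0)
      (𝓝 (∫ φ : ι → ℂ, Complex.exp (quadForm (G - (κ : ℂ) • 1) φ) *
        ((Real.exp (-(1 / 2) * ∑ x, ∑ y,
          Complex.normSq (φ x) * w x y * Complex.normSq (φ y)) : ℝ) : ℂ))) := by
  have hsmall : ∀ᶠ ν : ℝ in 𝓝[>] 0, 0 < ν ∧ κ * ν ≤ 1 := by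
    have h1 : ∀ᶠ ν : ℝ in 𝓝[>] 0, ν < κ⁻¹ :=
      nhdsWithin_le_nhds (Iio_mem_nhds (inv_pos.mpr hκ))
    filter_upwards [h1, self_mem_nhdsWithin] with ν h1 h2
    refine ⟨h2, ?_⟩
    have := mul_le_mul_of_nonneg_left h1.le hκ.le
    rwa [mul_inv_cancel₀ hκ.ne'] at this
  have hbound : Integrable (fun p : (ι → ℝ) × (ι → ℂ) => Real.exp (-(κ / 2) * sqNorm p.2))
      (γ.prod volume) := (integrable_exp_sqNorm (ι := ι) (half_pos hκ)).comp_snd γ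
  have hlimint : Tendsto (fun ν : ℝ => ∫ p, Complex.exp (fieldExponent G κ ν p)
      ∂(γ.prod (volume : Measure (ι → ℂ)))) (𝓝[>] 0)
      (𝓝 (∫ p : (ι → ℝ) × (ι → ℂ), Complex.exp (quadForm (G - (κ : ℂ) • 1) p.2
        + Complex.I * ((∑ x, Complex.normSq (p.2 x) * p.1 x : ℝ) : ℂ))
        ∂(γ.prod (volume : Measure (ι → ℂ))))) := by
    refine tendsto_integral_filter_of_dominated_convergence _
      (Eventually.of_forall fun ν => ?_) ?_ hbound ?_
    · exact (Complex.continuous_exp.comp (continuous_fieldExponent G κ ν)).aestronglyMeasurable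
    · filter_upwards [hsmall] with ν hν
      exact Eventually.of_forall fun p => norm_exp_fieldExponent_le hG hGs hκ hν.1 hν.2 p
    · exact Eventually.of_forall fun p =>
        (Complex.continuous_exp.tendsto _).comp (tendsto_fieldExponent G κ p)
  have hpt : ∀ p : (ι → ℝ) × (ι → ℂ), ‖Complex.exp (quadForm (G - (κ : ℂ) • 1) p.2
        + Complex.I * ((∑ x, Complex.normSq (p.2 x) * p.1 x : ℝ) : ℂ))‖
      ≤ Real.exp (-(κ / 2) * sqNorm p.2) := fun p => by
    refine le_of_tendsto
      ((Complex.continuous_exp.tendsto _).comp (tendsto_fieldExponent G κ p)).norm ?_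
    filter_upwards [hsmall] with ν hν
    exact norm_exp_fieldExponent_le hG hGs hκ hν.1 hν.2 p
  have hcont : Continuous fun p : (ι → ℝ) × (ι → ℂ) =>
      Complex.exp (quadForm (G - (κ : ℂ) • 1) p.2
        + Complex.I * ((∑ x, Complex.normSq (p.2 x) * p.1 x : ℝ) : ℂ)) := by
    have := continuous_quadForm (G - (κ : ℂ) • 1)
    have := Complex.continuous_normSq
    fun_prop
  have hlimeq : ∫ p : (ι → ℝ) × (ι → ℂ), Complex.exp (quadForm (G - (κ : ℂ) • 1) p.2
        + Complex.I * ((∑ x, Complex.normSq (p.2 x) * p.1 x : ℝ) : ℂ))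
        ∂(γ.prod (volume : Measure (ι → ℂ)))
      = ∫ φ : ι → ℂ, Complex.exp (quadForm (G - (κ : ℂ) • 1) φ) *
        ((Real.exp (-(1 / 2) * ∑ x, ∑ y,
          Complex.normSq (φ x) * w x y * Complex.normSq (φ y)) : ℝ) : ℂ) := by
    rw [integral_prod_symm _ (hbound.mono' hcont.aestronglyMeasurable (Eventually.of_forall hpt))]
    congr 1
    funext φ
    simp_rw [Complex.exp_add]
    rw [integral_const_mul, hγ]
  rw [← hlimeq]
  refine hlimint.congr' ?_
  filter_upwards [hsmall] with ν hν
  have hint : Integrable (fun p => Complex.exp (fieldExponent G κ ν p))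
      (γ.prod (volume : Measure (ι → ℂ))) := hbound.mono'
    (Complex.continuous_exp.comp (continuous_fieldExponent G κ ν)).aestronglyMeasurable
    (Eventually.of_forall fun p => norm_exp_fieldExponent_le hG hGs hκ hν.1 hν.2 p)
  rw [integral_prod _ hint, ← integral_const_mul]
  congr 1
  funext σ
  rw [integral_rescale _ hν.1]
  rfl

end FieldLimit

/-! ### The grand canonical partition function on the torus -/

section Torus

attribute [local instance] Matrix.linftyOpNormedRing Matrix.linftyOpNormedAlgebra

variable {d L : ℕ} [NeZero L]

/-- The generator `Δ/2` of the continuous-time random walk. -/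
def halfLap (d L : ℕ) [NeZero L] : Matrix (Tor d L) (Tor d L) ℂ := (1 / 2 : ℂ) • lap d L

lemma norm_halfLap_add_le : ‖halfLap d L + ((d : ℝ) : ℂ) • 1‖ ≤ (d : ℝ) := by
  refine norm_le_of_sum_row (Nat.cast_nonneg d) fun x => ?_
  have e : ∀ y, (halfLap d L + ((d : ℝ) : ℂ) • (1 : Matrix (Tor d L) (Tor d L) ℂ)) x y
      = (1 / 2 : ℂ) * ∑ j : Fin d, ((if y = x + unitVec d L j then (1 : ℂ) else 0)
        + (if y = x - unitVec d L j then (1 : ℂ) else 0)) := by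
    intro y
    rw [Matrix.add_apply, halfLap, Matrix.smul_apply, Matrix.smul_apply, Matrix.one_apply, lap]
    by_cases h : y = x
    · rw [if_pos h, if_pos h.symm]
      simp only [smul_eq_mul]
      push_cast
      ring
    · rw [if_neg h, if_neg (Ne.symm h)]
      simp
  have hb : ∀ y, ‖(halfLap d L + ((d : ℝ) : ℂ) • (1 : Matrix (Tor d L) (Tor d L) ℂ)) x y‖
      ≤ (1 / 2 : ℝ) * ∑ j : Fin d, ((if y = x + unitVec d L j then (1 : ℝ) else 0)
        + (if y = x - unitVec d L j then (1 : ℝ) else 0)) := by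
    intro y
    rw [e, norm_mul]
    have : ‖(1 / 2 : ℂ)‖ = 1 / 2 := by norm_num
    rw [this]
    refine mul_le_mul_of_nonneg_left ?_ (by norm_num)
    refine (norm_sum_le _ _).trans (Finset.sum_le_sum fun j _ => (norm_add_le _ _).trans ?_)
    refine add_le_add ?_ ?_ <;> split_ifs <;> simp
  refine (Finset.sum_le_sum fun y _ => hb y).trans ?_
  rw [← Finset.mul_sum, Finset.sum_comm]
  simp_rw [Finset.sum_add_distrib]
  simp
  linarith

lemma lap_transpose : (lap d L)ᵀ = lap d L := by
  ext x y
  rw [Matrix.transpose_apply, lap, lap]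
  congr 1
  · refine Finset.sum_congr rfl fun j _ => ?_
    rw [add_comm]
    congr 1
    · exact if_congr (by rw [eq_sub_iff_add_eq, eq_comm]) rfl rfl
    · exact if_congr (by rw [← sub_eq_iff_eq_add, eq_comm]) rfl rfl
  · exact if_congr eq_comm rfl rfl

lemma halfLap_transpose : (halfLap d L)ᵀ = halfLap d L := by
  rw [halfLap, Matrix.transpose_smul, lap_transpose]

/-- The pair interaction energy of a configuration. -/
def pairEnergy (v : Tor d L → ℝ) (lam : ℝ) {n : ℕ} (X : Cfg d L n) : ℝ :=
  lam / 2 * ∑ i : Fin n, ∑ j : Fin n, v (X i - X j)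

lemma pairEnergy_nonneg {v : Tor d L → ℝ} (hv : ∀ x, 0 ≤ v x) {lam : ℝ} (hlam : 0 ≤ lam) {n : ℕ}
    (X : Cfg d L n) : 0 ≤ pairEnergy v lam X :=
  mul_nonneg (by positivity) (Finset.sum_nonneg fun i _ => Finset.sum_nonneg fun j _ => hv _)

/-- Moving one particle changes the pair energy by at most `O(λ n)`. -/
lemma pairEnergy_lipschitz {v : Tor d L → ℝ} (hv : ∀ x, 0 ≤ v x) {lam : ℝ} (hlam : 0 ≤ lam)
    {n : ℕ} (X Y : Cfg d L n) :
    |pairEnergy v lam X - pairEnergy v lam Y|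
      ≤ (lam * n * ∑ x, v x) * ∑ i, (if X i = Y i then 0 else 1) := by
  set V := ∑ x, v x with hV
  have hvV : ∀ x, v x ≤ V := fun x => Finset.single_le_sum (fun y _ => hv y) (Finset.mem_univ x)
  have hpair : ∀ i j, |v (X i - X j) - v (Y i - Y j)|
      ≤ V * (if X i = Y i then 0 else 1) + V * (if X j = Y j then 0 else 1) := by
    intro i j
    have hV0 : 0 ≤ V := (hv 0).trans (hvV 0)
    have hle : |v (X i - X j) - v (Y i - Y j)| ≤ V := by
      rw [abs_le]
      constructor <;> linarith [hv (X i - X j), hv (Y i - Y j), hvV (X i - X j), hvV (Y i - Y j)]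
    by_cases h1 : X i = Y i
    · by_cases h2 : X j = Y j
      · simp [h1, h2]
      · rw [if_pos h1, if_neg h2]
        linarith
    · rw [if_neg h1]
      split_ifs <;> linarith
  rw [pairEnergy, pairEnergy, ← mul_sub, abs_mul, abs_of_nonneg (by positivity : 0 ≤ lam / 2),
    ← Finset.sum_sub_distrib]
  simp_rw [← Finset.sum_sub_distrib]
  calc lam / 2 * |∑ i, ∑ j, (v (X i - X j) - v (Y i - Y j))|
      ≤ lam / 2 * ∑ i, ∑ j, |v (X i - X j) - v (Y i - Y j)| := by
        gcongr
        exact (Finset.abs_sum_le_sum_abs _ _).trans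
          (Finset.sum_le_sum fun i _ => Finset.abs_sum_le_sum_abs _ _)
    _ ≤ lam / 2 * ∑ i, ∑ j, (V * (if X i = Y i then 0 else 1)
          + V * (if X j = Y j then 0 else 1)) := by
        gcongr with i _ j _
        exact hpair i j
    _ = (lam * n * V) * ∑ i, (if X i = Y i then 0 else 1) := by
        simp_rw [Finset.sum_add_distrib, ← Finset.mul_sum]
        simp only [Finset.sum_const, Finset.card_univ, Fintype.card_fin, nsmul_eq_mul,
          ← Finset.mul_sum]
        ring

lemma matExp_ham (v : Tor d L → ℝ) (ν κ lam : ℝ) (n : ℕ) :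
    matExp (-(ham d L v ν lam n
        + ((κ * ν * n : ℝ) : ℂ) • (1 : Matrix (Cfg d L n) (Cfg d L n) ℂ)))
      = ((Real.exp (-(κ * ν)) ^ n : ℝ) : ℂ) • NormedSpace.exp (liftSum (ν • halfLap d L) n
        - diagonal (fun X : Cfg d L n => (pairEnergy v lam X : ℂ))) := by
  have hk : ((-(ν / 2) : ℝ) : ℂ) • kin d L n = - liftSum (ν • halfLap d L) n := by
    ext X Y
    rw [Matrix.smul_apply, Matrix.neg_apply, kin, liftSum, ← Finset.sum_neg_distrib,
      Finset.smul_sum]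
    refine Finset.sum_congr rfl fun i _ => ?_
    rw [halfLap, Matrix.smul_apply, Matrix.smul_apply]
    split_ifs
    · rw [Complex.real_smul, smul_eq_mul, smul_eq_mul]
      push_cast
      ring
    · simp
  have hs : -(ham d L v ν lam n
        + ((κ * ν * n : ℝ) : ℂ) • (1 : Matrix (Cfg d L n) (Cfg d L n) ℂ))
      = diagonal (fun _ => ((-(κ * ν * n) : ℝ) : ℂ)) + (liftSum (ν • halfLap d L) n
        - diagonal (fun X : Cfg d L n => (pairEnergy v lam X : ℂ))) := by
    rw [ham, hk, ← Matrix.smul_one_eq_diagonal]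
    simp only [pairEnergy]
    push_cast
    rw [neg_smul]
    abel
  have hcomm : Commute (diagonal (fun _ : Cfg d L n => ((-(κ * ν * n) : ℝ) : ℂ)))
      (liftSum (ν • halfLap d L) n
        - diagonal (fun X : Cfg d L n => (pairEnergy v lam X : ℂ))) := by
    rw [← Matrix.smul_one_eq_diagonal]
    exact (Commute.one_left _).smul_left _
  have hd : NormedSpace.exp (diagonal (fun _ : Cfg d L n => ((-(κ * ν * n) : ℝ) : ℂ)))
      = ((Real.exp (-(κ * ν)) ^ n : ℝ) : ℂ) • (1 : Matrix (Cfg d L n) (Cfg d L n) ℂ) := by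
    rw [Matrix.exp_diagonal, Matrix.smul_one_eq_diagonal]
    congr 1
    funext X
    rw [Pi.coe_exp, ← Complex.exp_eq_exp_ℂ, ← Complex.ofReal_exp, ← Real.exp_nat_mul]
    congr 2
    ring
  rw [matExp_eq_exp, hs]
  refine (NormedSpace.exp_add_of_commute hcomm).trans ?_
  refine (congrArg (· * _) hd).trans ?_
  rw [Matrix.smul_mul, Matrix.one_mul]
  rfl

lemma symProj_eq_symMat (n : ℕ) : symProj d L n = symMat (Tor d L) n := rfl

lemma norm_term_sub_le {v : Tor d L → ℝ} (hv : ∀ x, 0 ≤ v x) {ν : ℝ} (hν : 0 < ν) (κ : ℝ)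
    (n : ℕ) :
    ‖(matExp (-(ham d L v ν (ν ^ 2) n
        + ((κ * ν * n : ℝ) : ℂ) • (1 : Matrix (Cfg d L n) (Cfg d L n) ℂ)))
        * symProj d L n).trace
      - ((Real.exp (-(κ * ν)) : ℝ) : ℂ) ^ n * (tensPow (NormedSpace.exp (ν • halfLap d L)) n
        * diagonal (fun X : Fin n → Tor d L =>
        ((Real.exp (-(ν ^ 2 / 2 * ∑ i, ∑ j, v (X i - X j))) : ℝ) : ℂ))
        * symMat (Tor d L) n).trace‖
      ≤ Real.exp (-(κ * ν)) ^ n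
        * (ν ^ 2 * n * (∑ x, v x) * n * (ν * ‖halfLap d L‖) * dimSym (Tor d L) n) := by
  have hA : ‖ν • halfLap d L + ((ν * d : ℝ) : ℂ) • 1‖ ≤ ν * d := by
    have e : ν • halfLap d L + ((ν * d : ℝ) : ℂ) • (1 : Matrix (Tor d L) (Tor d L) ℂ)
        = (ν : ℂ) • (halfLap d L + ((d : ℝ) : ℂ) • 1) := by
      rw [smul_add, smul_smul]
      push_cast
      rfl
    rw [e, norm_smul, Complex.norm_real, Real.norm_of_nonneg hν.le]
    exact mul_le_mul_of_nonneg_left norm_halfLap_add_le hν.le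
  have hV : 0 ≤ ∑ x, v x := Finset.sum_nonneg fun x _ => hv x
  have h := norm_trace_split_le hA (n := n) (pairEnergy v (ν ^ 2))
    (pairEnergy_nonneg hv (sq_nonneg ν)) (b := ν ^ 2 * n * ∑ x, v x) (by positivity)
    (pairEnergy_lipschitz hv (sq_nonneg ν))
  have hnorm : ‖ν • halfLap d L‖ = ν * ‖halfLap d L‖ := by
    rw [norm_smul, Real.norm_of_nonneg hν.le]
  rw [hnorm] at h
  rw [matExp_ham, symProj_eq_symMat, Matrix.smul_mul, Matrix.trace_smul, smul_eq_mul,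
    Complex.ofReal_pow, ← mul_sub, norm_mul, norm_pow, Complex.norm_real,
    Real.norm_of_nonneg (Real.exp_pos _).le, norm_sub_rev]
  exact mul_le_mul_of_nonneg_left h (pow_nonneg (Real.exp_pos _).le n)

lemma sq_mul_exp_le {κ : ℝ} (hκ : 0 < κ) {ν : ℝ} (hν : 0 < ν) (n : ℕ) :
    ν ^ 2 * (n : ℝ) ^ 2 * Real.exp (-(κ * ν)) ^ n
      ≤ 8 / κ ^ 2 * Real.exp (-(κ * ν / 2)) ^ n := by
  have h1 : Real.exp (-(κ * ν)) ^ n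
      = Real.exp (-(κ * ν / 2)) ^ n * Real.exp (-(κ * ν / 2 * n)) := by
    rw [← Real.exp_nat_mul, ← Real.exp_nat_mul, ← Real.exp_add]
    congr 1
    ring
  have hy : 0 ≤ κ * ν / 2 * n := by positivity
  have h2 := Real.quadratic_le_exp_of_nonneg hy
  have h3 : ν ^ 2 * (n : ℝ) ^ 2 * Real.exp (-(κ * ν / 2 * n)) ≤ 8 / κ ^ 2 := by
    rw [Real.exp_neg, ← div_eq_mul_inv, div_le_div_iff₀ (Real.exp_pos _) (by positivity)]
    nlinarith
  rw [h1]
  have h4 := pow_pos (Real.exp_pos (-(κ * ν / 2))) n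
  nlinarith

lemma intWeight_eq (v : Tor d L → ℝ) (φ : Tor d L → ℂ) :
    intWeight d L v φ = ((Real.exp (-(1 / 2) * ∑ x, ∑ y,
          Complex.normSq (φ x) * v (x - y) * Complex.normSq (φ y)) : ℝ) : ℂ) := by
  rw [intWeight]
  push_cast
  rfl

/-- The mean-field limit of the grand canonical partition function, normalized by `ν^|Λ|`. -/
lemma tendsto_grandXi {v : Tor d L → ℝ} (hv : ∀ x, 0 ≤ v x) (hvp : IsPosType d L v) {κ : ℝ}
    (hκ : 0 < κ) :
    Tendsto (fun ν : ℝ => (ν : ℂ) ^ Fintype.card (Tor d L) * grandXi d L v ν κ (ν ^ 2)) (𝓝[>] 0)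
      (𝓝 (((Real.pi : ℂ) ^ Fintype.card (Tor d L))⁻¹ *
        ∫ φ : Tor d L → ℂ, Complex.exp (quadForm (halfLap d L - (κ : ℂ) • 1) φ)
          * intWeight d L v φ)) := by
  obtain ⟨γ, hγp, hγ⟩ := exists_aux_field hvp
  set N := Fintype.card (Tor d L) with hN
  set V := ∑ x, v x with hVdef
  have hV : 0 ≤ V := Finset.sum_nonneg fun x _ => hv x
  have hπ : (Real.pi : ℂ) ^ N ≠ 0 := pow_ne_zero _ (by exact_mod_cast Real.pi_ne_zero)
  set J : ℝ → ℂ := fun ν => ∫ σ, (∫ φ, Complex.exp (quadForm (fieldMat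
    (NormedSpace.exp (ν • halfLap d L)) (Real.exp (-(κ * ν))) ν σ) φ - sqNorm φ)) ∂γ with hJ
  have hlim := tendsto_field_integral (w := fun x y => v (x - y)) hγ
    (norm_halfLap_add_le (d := d) (L := L)) halfLap_transpose hκ
  simp_rw [← intWeight_eq] at hlim
  have hsmall : ∀ᶠ ν : ℝ in 𝓝[>] 0, 0 < ν ∧ κ * ν ≤ 1 := by
    have h1 : ∀ᶠ ν : ℝ in 𝓝[>] 0, ν < κ⁻¹ :=
      nhdsWithin_le_nhds (Iio_mem_nhds (inv_pos.mpr hκ))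
    filter_upwards [h1, self_mem_nhdsWithin] with ν h1 h2
    refine ⟨h2, ?_⟩
    have := mul_le_mul_of_nonneg_left h1.le hκ.le
    rwa [mul_inv_cancel₀ hκ.ne'] at this
  set C : ℝ := V * ‖halfLap d L‖ * (8 / κ ^ 2) * (4 / κ) ^ N with hC
  have hC0 : 0 ≤ C := by positivity
  have herr : ∀ᶠ ν : ℝ in 𝓝[>] 0,
      ‖(ν : ℂ) ^ N * grandXi d L v ν κ (ν ^ 2) - (ν : ℂ) ^ N * (((Real.pi : ℂ) ^ N)⁻¹ * J ν)‖
        ≤ ν * C := by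
    filter_upwards [hsmall] with ν ⟨hν, hκν⟩
    set q := Real.exp (-(κ * ν / 2)) with hq
    have hq1 : κ * ν / 4 ≤ 1 - q := by
      have := one_sub_exp_neg_ge (x := κ * ν / 2) (by positivity) (by linarith)
      linarith
    have hκν0 : 0 < κ * ν := mul_pos hκ hν
    have hz1 : Real.exp (-(κ * ν)) < 1 := by
      rw [← Real.exp_zero]
      exact Real.exp_lt_exp.mpr (by linarith)
    have hsplit := (hasSum_split (w := fun x y => v (x - y)) hγ ν (Real.exp_pos (-(κ * ν))).le hz1
      (sum_row_exp_le (norm_halfLap_add_le (d := d) (L := L)) hν.le)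
      (sum_col_exp_le norm_halfLap_add_le halfLap_transpose hν.le)).mul_left
        (((Real.pi : ℂ) ^ N)⁻¹)
    simp_rw [← hN, inv_mul_cancel_left₀ hπ] at hsplit
    have hdim := (hasSum_dimSym (ι := Tor d L) (z := q) (Real.exp_pos _).le
      (by linarith)).mul_left (ν * (V * ‖halfLap d L‖ * (8 / κ ^ 2)))
    have hterm : ∀ n, ‖_‖ ≤ _ := fun n => (norm_term_sub_le hv hν κ n).trans (show _ ≤
      ν * (V * ‖halfLap d L‖ * (8 / κ ^ 2)) * (q ^ n * dimSym (Tor d L) n) by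
        have h1 := sq_mul_exp_le hκ hν n
        have h2 : 0 ≤ ν * V * ‖halfLap d L‖ * dimSym (Tor d L) n := by
          have := dimSym_nonneg (ι := Tor d L) n
          positivity
        have := mul_le_mul_of_nonneg_left h1 h2
        rw [← hq] at this
        calc _ = ν * V * ‖halfLap d L‖ * dimSym (Tor d L) n
              * (ν ^ 2 * (n : ℝ) ^ 2 * Real.exp (-(κ * ν)) ^ n) := by ring
          _ ≤ _ := this
          _ = _ := by ring)
    have hsumdiff : Summable _ := Summable.of_norm_bounded hdim.summable hterm
    have hXi : HasSum (fun n : ℕ => (matExp (-(ham d L v ν (ν ^ 2) n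
        + ((κ * ν * n : ℝ) : ℂ) • (1 : Matrix (Cfg d L n) (Cfg d L n) ℂ)))
        * symProj d L n).trace) (grandXi d L v ν κ (ν ^ 2)) := by
      have h := (hsumdiff.add hsplit.summable)
      simp only [sub_add_cancel] at h
      exact h.hasSum
    have hdiff := hXi.sub hsplit
    have hle := hdiff.norm_le_of_bounded hdim hterm
    rw [← mul_sub, norm_mul, norm_pow, Complex.norm_real, Real.norm_of_nonneg hν.le]
    calc ν ^ N * ‖grandXi d L v ν κ (ν ^ 2) - ((Real.pi : ℂ) ^ N)⁻¹ * J ν‖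
        ≤ ν ^ N * (ν * (V * ‖halfLap d L‖ * (8 / κ ^ 2)) * (1 / (1 - q)) ^ N) := by
          gcongr
      _ = ν * (V * ‖halfLap d L‖ * (8 / κ ^ 2)) * (ν * (1 / (1 - q))) ^ N := by
          rw [mul_pow]
          ring
      _ ≤ ν * (V * ‖halfLap d L‖ * (8 / κ ^ 2)) * (4 / κ) ^ N := by
          have hq0 : 0 < 1 - q := by linarith
          gcongr
          rw [mul_one_div, div_le_div_iff₀ hq0 hκ]
          linarith
      _ = ν * C := by rw [hC]; ring
  have hzero : Tendsto (fun ν : ℝ => (ν : ℂ) ^ N * grandXi d L v ν κ (ν ^ 2)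
      - (ν : ℂ) ^ N * (((Real.pi : ℂ) ^ N)⁻¹ * J ν)) (𝓝[>] 0) (𝓝 0) := by
    refine squeeze_zero_norm' herr ?_
    have : Tendsto (fun ν : ℝ => ν * C) (𝓝 0) (𝓝 (0 * C)) := tendsto_id.mul_const C
    rw [zero_mul] at this
    exact this.mono_left nhdsWithin_le_nhds
  have hsum := hzero.add (hlim.const_mul (((Real.pi : ℂ) ^ N)⁻¹))
  rw [zero_add] at hsum
  refine hsum.congr fun ν => ?_
  simp only [hJ]
  ring

end Torus

/-! ### The Gaussian normalization -/

section Gaussian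

open scoped ComplexOrder

variable {ι : Type*} [Fintype ι] [DecidableEq ι]

open scoped MatrixOrder in
lemma exists_conjTranspose_mul_self {H : Matrix ι ι ℂ} (hH : H.PosSemidef) :
    ∃ B : Matrix ι ι ℂ, H = Bᴴ * B := by
  obtain ⟨B, hB⟩ := CStarAlgebra.nonneg_iff_eq_star_mul_self.mp hH.nonneg
  exact ⟨B, hB⟩

lemma quadForm_conjTranspose_mul_self (B : Matrix ι ι ℂ) (φ : ι → ℂ) :
    quadForm (Bᴴ * B) φ = (sqNorm (B.mulVec φ) : ℂ) := by
  have h1 : quadForm (Bᴴ * B) φ = star φ ⬝ᵥ ((Bᴴ * B).mulVec φ) := rfl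
  rw [h1, ← Matrix.mulVec_mulVec, Matrix.dotProduct_mulVec, ← Matrix.star_mulVec, sqNorm]
  push_cast
  exact Finset.sum_congr rfl fun x _ => Complex.normSq_eq_conj_mul_self.symm

/-- The complex Gaussian integral `∫ e^{-⟨φ, Hφ⟩} = π^N / det H`. -/
lemma integral_exp_neg_quadForm {H : Matrix ι ι ℂ} (hH : H.PosDef) :
    ∫ φ, Complex.exp (-quadForm H φ) = (Real.pi : ℂ) ^ Fintype.card ι * (H.det)⁻¹ := by
  obtain ⟨B, hB⟩ := exists_conjTranspose_mul_self hH.posSemidef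
  have hdetH : H.det = ((Complex.normSq B.det : ℝ) : ℂ) := by
    rw [hB, Matrix.det_mul, Matrix.det_conjTranspose, Complex.normSq_eq_conj_mul_self]
    rfl
  have hdet0 : H.det ≠ 0 := hH.det_pos.ne'
  have hns : Complex.normSq B.det ≠ 0 := by
    intro h
    rw [h] at hdetH
    exact hdet0 (by simpa using hdetH)
  let f : (ι → ℂ) →ₗ[ℝ] (ι → ℂ) := (Matrix.toLin' B).restrictScalars ℝ
  have hf : LinearMap.det f = Complex.normSq B.det := by
    rw [LinearMap.det_restrictScalars, LinearMap.det_toLin', Algebra.norm_complex_apply]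
  have hfc : Continuous f := LinearMap.continuous_of_finiteDimensional f
  have hmap := Measure.map_linearMap_addHaar_eq_smul_addHaar (volume : Measure (ι → ℂ))
    (f := f) (by rw [hf]; exact hns)
  have hcont : Continuous fun φ : ι → ℂ => Complex.exp (-(sqNorm φ : ℂ)) := by
    have := continuous_sqNorm (ι := ι)
    fun_prop
  have hchange : ∫ φ, Complex.exp (-quadForm H φ)
      = ∫ φ, Complex.exp (-(sqNorm φ : ℂ)) ∂(Measure.map f volume) := by
    rw [integral_map hfc.aemeasurable hcont.aestronglyMeasurable]
    congr 1
    funext φ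
    rw [hB, quadForm_conjTranspose_mul_self]
    rfl
  have hone : ∫ φ : ι → ℂ, Complex.exp (-(sqNorm φ : ℂ)) = (Real.pi : ℂ) ^ Fintype.card ι := by
    have h := integral_exp_sqNorm (ι := ι) one_pos
    rw [div_one] at h
    rw [← Complex.ofReal_pow, ← h, ← integral_complex_ofReal]
    congr 1
    funext φ
    push_cast
    ring_nf
  have hpos : 0 ≤ (Complex.normSq B.det)⁻¹ := inv_nonneg.mpr (Complex.normSq_nonneg _)
  rw [hchange, hmap, integral_smul_measure, hone, hf, abs_of_nonneg hpos,
    ENNReal.toReal_ofReal hpos, hdetH, Complex.real_smul, mul_comm, Complex.ofReal_inv]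

end Gaussian

section Normalization

attribute [local instance] Matrix.linftyOpNormedRing Matrix.linftyOpNormedAlgebra

variable {d L : ℕ} [NeZero L]

lemma sqNorm_pos {ι : Type*} [Fintype ι] {φ : ι → ℂ} (hφ : φ ≠ 0) : 0 < sqNorm φ := by
  obtain ⟨x, hx⟩ := Function.ne_iff.mp hφ
  exact Finset.sum_pos' (fun y _ => Complex.normSq_nonneg _)
    ⟨x, Finset.mem_univ x, Complex.normSq_pos.mpr hx⟩

lemma lap_isHermitian : (lap d L).IsHermitian := by
  have hreal : ∀ x y, star (lap d L x y) = lap d L x y := by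
    intro x y
    simp only [lap, star_sub, star_sum, star_add]
    congr 1
    · refine Finset.sum_congr rfl fun j _ => ?_
      congr 1 <;> split_ifs <;> simp
    · split_ifs <;> simp
  ext x y
  rw [Matrix.conjTranspose_apply, hreal]
  exact congrFun (congrFun lap_transpose x) y

open scoped ComplexOrder in
lemma posDef_neg_halfLap_add {κ : ℝ} (hκ : 0 < κ) :
    ((-(1 / 2 : ℂ)) • lap d L + (κ : ℂ) • 1).PosDef := by
  set H := (-(1 / 2 : ℂ)) • lap d L + (κ : ℂ) • (1 : Matrix (Tor d L) (Tor d L) ℂ) with hH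
  have hherm : H.IsHermitian := by
    rw [Matrix.IsHermitian, hH, Matrix.conjTranspose_add, Matrix.conjTranspose_smul,
      Matrix.conjTranspose_smul, lap_isHermitian, Matrix.conjTranspose_one]
    simp
  refine Matrix.posDef_iff_dotProduct_mulVec.mpr ⟨hherm, fun φ hφ => ?_⟩
  rw [Complex.lt_def]
  refine ⟨?_, ?_⟩
  · set P := halfLap d L + ((d : ℝ) : ℂ) • (1 : Matrix (Tor d L) (Tor d L) ℂ) with hP
    have hPs : Pᵀ = P := by
      rw [hP, Matrix.transpose_add, Matrix.transpose_smul, Matrix.transpose_one,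
        halfLap_transpose]
    have hrow : ∀ x, ∑ y, ‖P x y‖ ≤ (d : ℝ) := fun x =>
      (sum_row_le_norm P x).trans norm_halfLap_add_le
    have hcol : ∀ y, ∑ x, ‖P x y‖ ≤ (d : ℝ) := fun y => by
      have : ∀ x, P x y = P y x := fun x => congrFun (congrFun hPs y) x
      simp_rw [this]
      exact hrow y
    have h1 := (Complex.re_le_norm _).trans (norm_quadForm_le hrow hcol φ)
    have h2 : star φ ⬝ᵥ (H.mulVec φ) = ((κ + d : ℝ) : ℂ) * (sqNorm φ : ℂ) - quadForm P φ := by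
      have hHP : H = ((κ + d : ℝ) : ℂ) • 1 - P := by
        rw [hH, hP, halfLap]
        push_cast
        rw [add_smul, neg_smul]
        abel
      have hone : star φ ⬝ᵥ φ = (sqNorm φ : ℂ) := by
        rw [sqNorm]
        push_cast
        exact Finset.sum_congr rfl fun x _ => Complex.normSq_eq_conj_mul_self.symm
      rw [hHP, Matrix.sub_mulVec, Matrix.smul_mulVec, Matrix.one_mulVec, dotProduct_sub,
        dotProduct_smul, hone, smul_eq_mul]
      rfl
    rw [h2, Complex.sub_re, Complex.re_ofReal_mul, Complex.ofReal_re, Complex.zero_re]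
    nlinarith [mul_pos hκ (sqNorm_pos hφ)]
  · exact (hherm.im_star_dotProduct_mulVec_self φ).symm

open scoped ComplexOrder in
lemma det_neg_halfLap_add_ne_zero {κ : ℝ} (hκ : 0 < κ) :
    ((-(1 / 2 : ℂ)) • lap d L + (κ : ℂ) • 1).det ≠ 0 :=
  (posDef_neg_halfLap_add hκ).det_pos.ne'

lemma isPosType_zero : IsPosType d L 0 := fun ξ => by simp [dft]

/-- At zero coupling the potential does not enter the partition function. -/
lemma grandXi_zero_coupling (v : Tor d L → ℝ) (ν κ lam : ℝ) :
    grandXi d L v ν κ 0 = grandXi d L 0 ν κ lam := by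
  have h : ∀ n, ham d L v ν 0 n = ham d L 0 ν lam n := fun n => by simp [ham]
  simp only [grandXi, h]

end Normalization

/-- **Mean-field limit of the relative partition function** (Theorem 1.2 (i)):
for `v` pointwise nonnegative and of positive type and `κ > 0`,
`lim_{ν→0⁺} 𝒵^{ν,κ,ν²} = 𝒵^{cl}`. -/
theorem mean_field_limit_partition_function
    (d L : ℕ) (hd : 1 ≤ d) [NeZero L] (κ : ℝ) (hκ : 0 < κ)
    (v : Tor d L → ℝ) (hv_nonneg : ∀ x, 0 ≤ v x) (hv_pos : IsPosType d L v) :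
    Tendsto (fun ν : ℝ => relZ d L v ν κ (ν ^ 2)) (𝓝[>] (0 : ℝ))
      (𝓝 (Zcl d L v κ)) := by
  set N := Fintype.card (Tor d L) with hN
  set H := (-(1 / 2 : ℂ)) • lap d L + (κ : ℂ) • (1 : Matrix (Tor d L) (Tor d L) ℂ) with hH
  have hHpd := posDef_neg_halfLap_add (d := d) (L := L) hκ
  have hπ : (Real.pi : ℂ) ^ N ≠ 0 := pow_ne_zero _ (by exact_mod_cast Real.pi_ne_zero)
  have hdet : H.det ≠ 0 := det_neg_halfLap_add_ne_zero hκ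
  have hneg : halfLap d L - (κ : ℂ) • 1 = -H := by
    rw [hH, halfLap, neg_smul]
    abel
  have hquad : ∀ φ, quadForm (halfLap d L - (κ : ℂ) • 1) φ = -quadForm H φ := fun φ => by
    rw [hneg, quadForm, quadForm, ← Finset.sum_neg_distrib]
    exact Finset.sum_congr rfl fun x _ => by rw [Matrix.neg_mulVec, Pi.neg_apply, mul_neg]
  have hgauss : ∫ φ : Tor d L → ℂ, Complex.exp (quadForm (halfLap d L - (κ : ℂ) • 1) φ)
      = (Real.pi : ℂ) ^ N * (H.det)⁻¹ := by
    simp_rw [hquad]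
    exact integral_exp_neg_quadForm hHpd
  have h1 := tendsto_grandXi hv_nonneg hv_pos hκ
  -- The free partition function is the case of vanishing potential.
  have h0 := tendsto_grandXi (v := (0 : Tor d L → ℝ)) (fun _ => le_rfl) isPosType_zero hκ
  have hw0 : ∀ φ, intWeight d L 0 φ = 1 := fun φ => by simp [intWeight]
  simp_rw [hw0, mul_one] at h0
  rw [hgauss, ← hN, inv_mul_cancel_left₀ hπ] at h0
  have hratio := h1.div h0 (inv_ne_zero hdet)
  have hZ : Zcl d L v κ = ((Real.pi : ℂ) ^ N)⁻¹ *
      (∫ φ : Tor d L → ℂ, Complex.exp (quadForm (halfLap d L - (κ : ℂ) • 1) φ)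
          * intWeight d L v φ) / (H.det)⁻¹ := by
    have hdi : H⁻¹.det = (H.det)⁻¹ := by rw [Matrix.det_nonsing_inv, Ring.inverse_eq_inv']
    have hg : ∀ φ, gaussWeight d L κ φ * intWeight d L v φ
        = ((Real.pi : ℂ) ^ N * (H.det)⁻¹)⁻¹ *
          (Complex.exp (quadForm (halfLap d L - (κ : ℂ) • 1) φ) * intWeight d L v φ) := by
      intro φ
      rw [← mul_assoc, ← hdi]
      rfl
    rw [Zcl]
    simp_rw [hg]
    rw [integral_const_mul, mul_inv, div_eq_mul_inv]
    ring
  rw [hZ]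
  refine hratio.congr' ?_
  filter_upwards [self_mem_nhdsWithin] with ν hν
  have hν0 : (ν : ℂ) ^ N ≠ 0 := pow_ne_zero _ (by exact_mod_cast (show (0 : ℝ) < ν from hν).ne')
  simp only [Pi.div_apply]
  rw [relZ, grandXi_zero_coupling v ν κ (ν ^ 2), mul_div_mul_left _ _ hν0]
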